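/- arXiv:2001.11289 — 4 statements merged into one kernel-verified Lean document; each statement's English description precedes it below -/
import Mathlib

section
/- Let K ⊆ ℝⁿ be a compact, connected set with positive Lebesgue measure satisfying Assumption 1, and let f be a real polynomial in n variables. Then there exist a constant C > 0 and r₀ ∈ ℕ such that for all r ≥ r₀, f_pfm^(r) − f_min ≤ C·(log r)²/r²·(f_max − f_min). -/
open MeasureTheory Polynomial Set

noncomputable section

/-- `Σ[t]_r`: univariate polynomials that are finite sums of squares of
polynomials of degree at most `r`. -/
def IsSOSUpTo (s : Polynomial ℝ) (r : ℕ) : Prop :=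
  ∃ (m : ℕ) (p : Fin m → Polynomial ℝ), (∀ i, (p i).natDegree ≤ r) ∧ s = ∑ i, (p i) ^ 2

/-- The push-forward bound `f_pfm^(r)` on `K` (with respect to the Lebesgue
measure restricted to `K`). -/
def pfmBound {n : ℕ} (K : Set (EuclideanSpace ℝ (Fin n)))
    (f : MvPolynomial (Fin n) ℝ) (r : ℕ) : ℝ :=
  sInf { v : ℝ | ∃ s : Polynomial ℝ, IsSOSUpTo s r ∧
    (∫ x in K, s.eval (MvPolynomial.eval (fun i => x i) f)) = 1 ∧
    v = ∫ x in K, MvPolynomial.eval (fun i => x i) f * s.eval (MvPolynomial.eval (fun i => x i) f) }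

/-- Assumption 1: there are `ε_K, η_K > 0` and `N ≥ n` such that
`vol(K ∩ B_δ(x)) ≥ η_K δ^N vol(Bⁿ)` for all `x ∈ K` and `0 < δ ≤ ε_K`. -/
def Assumption1 {n : ℕ} (K : Set (EuclideanSpace ℝ (Fin n))) : Prop :=
  ∃ εK ηK N : ℝ, 0 < εK ∧ 0 < ηK ∧ (n : ℝ) ≤ N ∧
    ∀ x ∈ K, ∀ δ : ℝ, 0 < δ → δ ≤ εK →
      ENNReal.ofReal (ηK * δ ^ N) * volume (Metric.ball (0 : EuclideanSpace ℝ (Fin n)) 1)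
        ≤ volume (K ∩ Metric.closedBall x δ)

lemma cheb_large (r : ℕ) {θ y : ℝ} (hθ : 0 ≤ θ) (hy : Real.cosh θ ≤ y) :
    Real.cosh (r * θ) ≤ (Polynomial.Chebyshev.T ℝ r).eval y := by
  have h1 : 1 ≤ y := (Real.one_le_cosh θ).trans hy
  have h2 : θ ≤ Real.arcosh y := by
    rw [← Real.arcosh_cosh hθ]
    exact (Real.arcosh_le_arcosh (Real.cosh_pos θ) (by linarith)).2 hy
  have h3 := Polynomial.Chebyshev.T_real_cosh (Real.arcosh y) (r : ℤ)
  rw [Real.cosh_arcosh h1] at h3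
  rw [h3, Real.cosh_le_cosh]
  have hr : (0 : ℝ) ≤ r := Nat.cast_nonneg r
  push_cast
  rw [abs_of_nonneg (mul_nonneg hr hθ), abs_of_nonneg (mul_nonneg hr (hθ.trans h2))]
  exact mul_le_mul_of_nonneg_left h2 hr

lemma cosh_le_one_add_sq {θ : ℝ} (h0 : 0 ≤ θ) (h1 : θ ≤ 1) : Real.cosh θ ≤ 1 + θ ^ 2 := by
  have h2 : θ ^ 2 ≤ 1 := by nlinarith
  have h3 := Real.abs_exp_sub_one_le (x := θ ^ 2 / 2)
    (by rw [abs_of_nonneg (by positivity)]; linarith)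
  rw [abs_of_nonneg (by positivity : (0:ℝ) ≤ θ ^ 2 / 2)] at h3
  have := Real.cosh_le_exp_half_sq θ
  have := le_abs_self (Real.exp (θ ^ 2 / 2) - 1)
  linarith

lemma cheb_poly {m M θ : ℝ} (hmM : m < M) (h0 : 0 < θ) (h1 : θ ≤ 1) (r : ℕ) :
    ∃ p : Polynomial ℝ, p.natDegree ≤ r ∧
      (∀ t, m ≤ t → t ≤ M →
        (t - m) * (p.eval t) ^ 2 ≤ 2 * (M - m) * θ ^ 2 * (p.eval t) ^ 2 + (M - m)) ∧
      (∀ t, m ≤ t → t ≤ m + (M - m) * θ ^ 2 / 3 →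
        Real.cosh (r * θ) ^ 2 ≤ (p.eval t) ^ 2) := by
  have hR : 0 < M - m := by linarith
  have hsq : θ ^ 2 ≤ 1 := by nlinarith
  refine ⟨(Polynomial.Chebyshev.T ℝ r).comp
    (Polynomial.C (-((1 + 2 * θ ^ 2) / (M - m))) * Polynomial.X
      + Polynomial.C (M * ((1 + 2 * θ ^ 2) / (M - m)))), ?_, ?_, ?_⟩
  · refine Polynomial.natDegree_comp_le.trans ?_
    have h := Polynomial.natDegree_linear_le (a := -((1 + 2 * θ ^ 2) / (M - m)))
      (b := M * ((1 + 2 * θ ^ 2) / (M - m)))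
    rw [Polynomial.Chebyshev.natDegree_T, Int.natAbs_natCast]
    calc _ ≤ r * 1 := Nat.mul_le_mul_left _ h
      _ = r := mul_one r
  · intro t ht1 ht2
    rw [Polynomial.eval_comp]
    set y := Polynomial.eval t (Polynomial.C (-((1 + 2 * θ ^ 2) / (M - m))) * Polynomial.X
      + Polynomial.C (M * ((1 + 2 * θ ^ 2) / (M - m)))) with hy
    have hy' : y = (M - t) * (1 + 2 * θ ^ 2) / (M - m) := by
      rw [hy]; simp; ring
    rcases le_or_gt (t - m) (2 * (M - m) * θ ^ 2) with hc | hc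
    · have := mul_le_mul_of_nonneg_right hc
        (sq_nonneg (Polynomial.eval y (Polynomial.Chebyshev.T ℝ r)))
      linarith
    · have hy0 : 0 ≤ y := by
        rw [hy']; apply div_nonneg _ hR.le
        apply mul_nonneg (by linarith); positivity
      have hy1 : y ≤ 1 := by
        rw [hy', div_le_one hR]
        have : (M - t) * (1 + 2 * θ ^ 2) ≤ ((M - m) * (1 - 2 * θ ^ 2)) * (1 + 2 * θ ^ 2) := by
          apply mul_le_mul_of_nonneg_right _ (by positivity)
          linarith
        have h4 : 0 ≤ (M - m) * θ ^ 4 := by positivity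
        nlinarith
      have h := Polynomial.Chebyshev.abs_eval_T_real_le_one (r : ℤ)
        (x := y) (by rw [abs_of_nonneg hy0]; exact hy1)
      have h2 : (Polynomial.eval y (Polynomial.Chebyshev.T ℝ r)) ^ 2 ≤ 1 := by
        rw [sq_le_one_iff_abs_le_one]; exact h
      have h3 : 0 ≤ 2 * (M - m) * θ ^ 2 *
        (Polynomial.eval y (Polynomial.Chebyshev.T ℝ r)) ^ 2 := by positivity
      have h4 : (t - m) * (Polynomial.eval y (Polynomial.Chebyshev.T ℝ r)) ^ 2 ≤ (t - m) * 1 :=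
        mul_le_mul_of_nonneg_left h2 (by linarith)
      linarith
  · intro t ht1 ht2
    rw [Polynomial.eval_comp]
    apply pow_le_pow_left₀ (Real.cosh_pos _).le
    apply cheb_large r h0.le
    refine (cosh_le_one_add_sq h0.le h1).trans ?_
    have hy' : Polynomial.eval t (Polynomial.C (-((1 + 2 * θ ^ 2) / (M - m))) * Polynomial.X
      + Polynomial.C (M * ((1 + 2 * θ ^ 2) / (M - m))))
        = (M - t) * (1 + 2 * θ ^ 2) / (M - m) := by
      simp; ring
    rw [hy', le_div_iff₀ hR]
    have h5 : (M - m) * (1 - θ ^ 2 / 3) * (1 + 2 * θ ^ 2) ≤ (M - t) * (1 + 2 * θ ^ 2) := by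
      apply mul_le_mul_of_nonneg_right _ (by positivity)
      linarith
    have h6 : 0 ≤ (M - m) * (θ ^ 2 * (1 - θ ^ 2)) :=
      mul_nonneg hR.le (mul_nonneg (sq_nonneg _) (by linarith))
    nlinarith

lemma contDiff_mvEval {n : ℕ} (f : MvPolynomial (Fin n) ℝ) :
    ContDiff ℝ 1 (fun x : EuclideanSpace ℝ (Fin n) => MvPolynomial.eval (fun i => x i) f) := by
  induction f using MvPolynomial.induction_on with
  | C a => simpa using contDiff_const
  | add p q hp hq => simpa using hp.add hq
  | mul_X p i hp =>
    simp only [map_mul, MvPolynomial.eval_X]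
    exact hp.mul (by fun_prop)

lemma pfm_le {n : ℕ} {K : Set (EuclideanSpace ℝ (Fin n))} (hKc : IsCompact K)
    (f : MvPolynomial (Fin n) ℝ) {m B : ℝ} {r : ℕ}
    (hm : ∀ x ∈ K, m ≤ MvPolynomial.eval (fun i => x i) f)
    {p : Polynomial ℝ} (hp : p.natDegree ≤ r)
    (hI : 0 < ∫ x in K, (p.eval (MvPolynomial.eval (fun i => x i) f)) ^ 2)
    (hB : ∫ x in K, (MvPolynomial.eval (fun i => x i) f - m) *
        (p.eval (MvPolynomial.eval (fun i => x i) f)) ^ 2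
      ≤ B * ∫ x in K, (p.eval (MvPolynomial.eval (fun i => x i) f)) ^ 2) :
    pfmBound K f r - m ≤ B := by
  have hcf := (contDiff_mvEval f).continuous
  have hcs : ∀ s : Polynomial ℝ, Continuous
      (fun x : EuclideanSpace ℝ (Fin n) => s.eval (MvPolynomial.eval (fun i => x i) f)) :=
    fun s => s.continuous.comp hcf
  have hintOn : ∀ g : EuclideanSpace ℝ (Fin n) → ℝ, Continuous g → IntegrableOn g K :=
    fun g hg => hg.continuousOn.integrableOn_compact hKc
  set I := ∫ x in K, (p.eval (MvPolynomial.eval (fun i => x i) f)) ^ 2 with hIdef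
  have hbdd : BddBelow { v : ℝ | ∃ s : Polynomial ℝ, IsSOSUpTo s r ∧
    (∫ x in K, s.eval (MvPolynomial.eval (fun i => x i) f)) = 1 ∧
    v = ∫ x in K, MvPolynomial.eval (fun i => x i) f *
      s.eval (MvPolynomial.eval (fun i => x i) f) } := by
    refine ⟨m, ?_⟩
    rintro v ⟨s, ⟨k, q, -, hs⟩, h1, rfl⟩
    have hle : ∫ x in K, m * s.eval (MvPolynomial.eval (fun i => x i) f) ≤
        ∫ x in K, MvPolynomial.eval (fun i => x i) f *
          s.eval (MvPolynomial.eval (fun i => x i) f) := by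
      apply setIntegral_mono_on (hintOn _ (continuous_const.mul (hcs s)))
        (hintOn _ (hcf.mul (hcs s))) hKc.measurableSet
      intro x hx
      apply mul_le_mul_of_nonneg_right (hm x hx)
      show 0 ≤ s.eval (MvPolynomial.eval (fun i => x i) f)
      rw [hs, Polynomial.eval_finsetSum]
      apply Finset.sum_nonneg
      intro i _
      rw [Polynomial.eval_pow]
      positivity
    rw [integral_const_mul, h1, mul_one] at hle
    exact hle
  have hmem : (∫ x in K, MvPolynomial.eval (fun i => x i) f *
      (p.eval (MvPolynomial.eval (fun i => x i) f)) ^ 2) / I ∈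
      { v : ℝ | ∃ s : Polynomial ℝ, IsSOSUpTo s r ∧
    (∫ x in K, s.eval (MvPolynomial.eval (fun i => x i) f)) = 1 ∧
    v = ∫ x in K, MvPolynomial.eval (fun i => x i) f *
      s.eval (MvPolynomial.eval (fun i => x i) f) } := by
    have hev : ∀ t : ℝ, (∑ _i : Fin 1, (Polynomial.C ((Real.sqrt I)⁻¹) * p) ^ 2).eval t
        = I⁻¹ * (p.eval t) ^ 2 := by
      intro t
      simp only [Finset.univ_unique, Finset.sum_const, Finset.card_singleton, one_smul,
        Polynomial.eval_pow, Polynomial.eval_mul, Polynomial.eval_C, mul_pow, inv_pow,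
        Real.sq_sqrt hI.le]
    refine ⟨∑ _i : Fin 1, (Polynomial.C ((Real.sqrt I)⁻¹) * p) ^ 2,
      ⟨1, fun _ => Polynomial.C ((Real.sqrt I)⁻¹) * p, fun _ => ?_, rfl⟩, ?_, ?_⟩
    · exact (Polynomial.natDegree_C_mul_le _ _).trans hp
    · simp only [hev]
      rw [integral_const_mul, ← hIdef, inv_mul_cancel₀ hI.ne']
    · simp only [hev]
      rw [div_eq_inv_mul, ← integral_const_mul]
      congr 1
      ext x
      ring
  have h1 : pfmBound K f r ≤ _ := csInf_le hbdd hmem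
  have hc2 : Continuous (fun x : EuclideanSpace ℝ (Fin n) =>
    (p.eval (MvPolynomial.eval (fun i => x i) f)) ^ 2) := (hcs p).pow 2
  have h2 : ∫ x in K, (MvPolynomial.eval (fun i => x i) f - m) *
        (p.eval (MvPolynomial.eval (fun i => x i) f)) ^ 2 =
      (∫ x in K, MvPolynomial.eval (fun i => x i) f *
        (p.eval (MvPolynomial.eval (fun i => x i) f)) ^ 2) - m * I := by
    simp only [sub_mul]
    have ha := hintOn (fun x => MvPolynomial.eval (fun i => x i) f *
        (p.eval (MvPolynomial.eval (fun i => x i) f)) ^ 2) (hcf.mul hc2)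
    have hb := hintOn (fun x => m *
        (p.eval (MvPolynomial.eval (fun i => x i) f)) ^ 2) (continuous_const.mul hc2)
    rw [integral_sub ha hb, integral_const_mul]
  rw [h2] at hB
  have h3 : (∫ x in K, MvPolynomial.eval (fun i => x i) f *
        (p.eval (MvPolynomial.eval (fun i => x i) f)) ^ 2) / I ≤ B + m := by
    rw [div_le_iff₀ hI]; linarith
  linarith

lemma pfm_core {n : ℕ} {K : Set (EuclideanSpace ℝ (Fin n))} (hKc : IsCompact K)
    (f : MvPolynomial (Fin n) ℝ) {m M θ V : ℝ} {r : ℕ} (hmM : m < M)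
    (hm : ∀ x ∈ K, m ≤ MvPolynomial.eval (fun i => x i) f)
    (hM : ∀ x ∈ K, MvPolynomial.eval (fun i => x i) f ≤ M)
    (h0 : 0 < θ) (h1 : θ ≤ 1) (hV : 0 < V)
    (hVK : V ≤ volume.real (K ∩ {x | MvPolynomial.eval (fun i => x i) f
      ≤ m + (M - m) * θ ^ 2 / 3}))
    (hK : volume.real K ≤ 2 * θ ^ 2 * (Real.cosh (r * θ) ^ 2 * V)) :
    pfmBound K f r - m ≤ 4 * (M - m) * θ ^ 2 := by
  obtain ⟨p, hp, hp1, hp2⟩ := cheb_poly hmM h0 h1 r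
  have hcf := (contDiff_mvEval f).continuous
  have hintOn : ∀ g : EuclideanSpace ℝ (Fin n) → ℝ, Continuous g → IntegrableOn g K :=
    fun g hg => hg.continuousOn.integrableOn_compact hKc
  have hc2 : Continuous (fun x : EuclideanSpace ℝ (Fin n) =>
    (p.eval (MvPolynomial.eval (fun i => x i) f)) ^ 2) := (p.continuous.comp hcf).pow 2
  set S := K ∩ {x : EuclideanSpace ℝ (Fin n) | MvPolynomial.eval (fun i => x i) f
      ≤ m + (M - m) * θ ^ 2 / 3} with hS
  have hSm : MeasurableSet S :=
    hKc.measurableSet.inter (measurableSet_le hcf.measurable measurable_const)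
  have hSK : S ⊆ K := inter_subset_left
  have hSfin : volume S ≠ ⊤ := (measure_mono hSK).trans_lt hKc.measure_lt_top |>.ne
  have hlow : Real.cosh (r * θ) ^ 2 * V ≤
      ∫ x in K, (p.eval (MvPolynomial.eval (fun i => x i) f)) ^ 2 := by
    calc Real.cosh (r * θ) ^ 2 * V ≤ Real.cosh (r * θ) ^ 2 * volume.real S := by gcongr
      _ ≤ ∫ x in S, (p.eval (MvPolynomial.eval (fun i => x i) f)) ^ 2 := by
        apply setIntegral_ge_of_const_le_real hSm hSfin _ ((hintOn _ hc2).mono_set hSK)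
        intro x hx
        exact hp2 _ (hm x hx.1) hx.2
      _ ≤ _ := by
        apply setIntegral_mono_set (hintOn _ hc2)
        · exact Filter.Eventually.of_forall fun x => sq_nonneg _
        · exact hSK.eventuallyLE
  have hcosh := Real.cosh_pos (r * θ)
  refine pfm_le hKc f hm hp (lt_of_lt_of_le (by positivity) hlow) ?_
  have hR : 0 < M - m := by linarith
  calc _ ≤ ∫ x in K, (2 * (M - m) * θ ^ 2 * (p.eval (MvPolynomial.eval (fun i => x i) f)) ^ 2
        + (M - m)) := by
        apply setIntegral_mono_on (hintOn _ ((hcf.sub continuous_const).mul hc2))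
          (hintOn _ ((continuous_const.mul hc2).add continuous_const)) hKc.measurableSet
        intro x hx
        exact hp1 _ (hm x hx) (hM x hx)
    _ = 2 * (M - m) * θ ^ 2 * (∫ x in K, (p.eval (MvPolynomial.eval (fun i => x i) f)) ^ 2)
        + volume.real K * (M - m) := by
        have ha := hintOn (fun x => 2 * (M - m) * θ ^ 2 *
          (p.eval (MvPolynomial.eval (fun i => x i) f)) ^ 2) (continuous_const.mul hc2)
        have hb := hintOn (fun _ => M - m) continuous_const
        rw [integral_add ha hb, integral_const_mul, setIntegral_const, smul_eq_mul]
    _ ≤ _ := by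
        have h5 : 2 * θ ^ 2 * (Real.cosh (r * θ) ^ 2 * V) ≤ 2 * θ ^ 2 *
          ∫ x in K, (p.eval (MvPolynomial.eval (fun i => x i) f)) ^ 2 := by gcongr
        have h6 := mul_le_mul_of_nonneg_right (hK.trans h5) hR.le
        linarith

/-- Theorem 1: on a compact connected `K` of positive measure satisfying
Assumption 1, `f_pfm^(r) - f_min = O(log² r / r²) · (f_max - f_min)`. -/
theorem pfm_bound_convergence_rate {n : ℕ} (K : Set (EuclideanSpace ℝ (Fin n)))
    (hKc : IsCompact K) (hKconn : IsConnected K) (hKpos : 0 < volume K)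
    (hK1 : Assumption1 K) (f : MvPolynomial (Fin n) ℝ) :
    ∃ C > (0 : ℝ), ∃ r₀ : ℕ, ∀ r : ℕ, r₀ ≤ r →
      pfmBound K f r - sInf ((fun x => MvPolynomial.eval (fun i => x i) f) '' K) ≤
        C * (Real.log r) ^ 2 / (r : ℝ) ^ 2 *
          (sSup ((fun x => MvPolynomial.eval (fun i => x i) f) '' K) -
            sInf ((fun x => MvPolynomial.eval (fun i => x i) f) '' K)) := by
  have hcf := (contDiff_mvEval f).continuous
  set F : EuclideanSpace ℝ (Fin n) → ℝ := fun x => MvPolynomial.eval (fun i => x i) f with hF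
  have hcpt : IsCompact (F '' K) := hKc.image hcf
  have hne : (F '' K).Nonempty := hKconn.nonempty.image F
  set m := sInf (F '' K) with hmdef
  set M := sSup (F '' K) with hMdef
  have hm : ∀ x ∈ K, m ≤ F x := fun x hx => csInf_le hcpt.bddBelow (mem_image_of_mem F hx)
  have hM : ∀ x ∈ K, F x ≤ M := fun x hx => le_csSup hcpt.bddAbove (mem_image_of_mem F hx)
  have hmM : m ≤ M := (hm _ hKconn.nonempty.some_mem).trans (hM _ hKconn.nonempty.some_mem)
  have hKr : 0 < volume.real K := ENNReal.toReal_pos hKpos.ne' hKc.measure_lt_top.ne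
  rcases hmM.eq_or_lt with heq | hlt
  · refine ⟨1, one_pos, 0, fun r _ => ?_⟩
    rw [← heq, sub_self, mul_zero]
    apply pfm_le hKc f hm (p := 1) (by simp)
    · simpa using hKr
    · rw [zero_mul]
      apply le_of_eq
      apply setIntegral_eq_zero_of_forall_eq_zero
      intro x hx
      have h1 : F x = m := le_antisymm (by rw [heq]; exact hM x hx) (hm x hx)
      have h2 : MvPolynomial.eval (fun i => x i) f = m := h1
      rw [h2, sub_self, zero_mul]
  have hR : 0 < M - m := by linarith
  obtain ⟨x0, hx0, hx0m⟩ : ∃ x ∈ K, F x = m := hcpt.sInf_mem hne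
  obtain ⟨L0, U, hU, hL0⟩ := (contDiff_mvEval f).locallyLipschitz x0
  obtain ⟨ρ, hρ, hρU⟩ := Metric.nhds_basis_closedBall.mem_iff.1 hU
  set L : ℝ := (L0 : ℝ) + 1 with hL
  have hLpos : 0 < L := by have := L0.coe_nonneg; linarith
  have hLip : ∀ δ, 0 ≤ δ → δ ≤ ρ → ∀ x ∈ Metric.closedBall x0 δ, F x ≤ m + L * δ := by
    intro δ hδ0 hδ x hx
    have hxU := hρU (Metric.closedBall_subset_closedBall hδ hx)
    have hx0U := hρU (Metric.mem_closedBall_self hρ.le)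
    have h1 : dist (F x) (F x0) ≤ L0 * dist x x0 := hL0.dist_le_mul x hxU x0 hx0U
    rw [Real.dist_eq, hx0m] at h1
    have h2 := le_abs_self (F x - m)
    have h3 : dist x x0 ≤ δ := hx
    have h4 : (L0 : ℝ) * dist x x0 ≤ L0 * δ := mul_le_mul_of_nonneg_left h3 L0.coe_nonneg
    have : L * δ = L0 * δ + δ := by rw [hL]; ring
    linarith
  obtain ⟨εK, ηK, N, hε, hη, -, hvol⟩ := hK1
  obtain ⟨N', hN'⟩ := exists_nat_ge N
  set v : ℝ := volume.real (Metric.ball (0 : EuclideanSpace ℝ (Fin n)) 1) with hv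
  have hvpos : 0 < v :=
    ENNReal.toReal_pos (Metric.measure_ball_pos _ _ one_pos).ne' measure_ball_lt_top.ne
  set D : ℝ := (M - m) / (3 * L) with hD
  have hDpos : 0 < D := by positivity
  set c : ℕ := N' + 2 with hc
  set A : ℝ := ηK * D ^ N' * v with hA
  have hApos : 0 < A := by positivity
  have hcpos : (1 : ℝ) ≤ c := by rw [hc]; push_cast; have := Nat.cast_nonneg (α := ℝ) N'; linarith
  have t1 : Filter.Tendsto (fun r : ℕ => (c : ℝ) * (Real.log r / r)) Filter.atTop
      (nhds 0) := by
    have h : Filter.Tendsto (fun x : ℝ => Real.log x / x) Filter.atTop (nhds 0) :=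
      Real.isLittleO_log_id_atTop.tendsto_div_nhds_zero
    have := (h.comp (tendsto_natCast_atTop_atTop (R := ℝ))).const_mul (c : ℝ)
    simpa using this
  have tsq : Filter.Tendsto (fun r : ℕ => (r : ℝ) ^ 2) Filter.atTop Filter.atTop :=
    (Filter.tendsto_pow_atTop two_ne_zero).comp (tendsto_natCast_atTop_atTop (R := ℝ))
  have t2 : Filter.Tendsto (fun r : ℕ => D / (r : ℝ) ^ 2) Filter.atTop (nhds 0) :=
    tsq.const_div_atTop D
  have e1 := t1.eventually_le_const (zero_lt_one' ℝ)
  have e2 := t2.eventually_le_const (lt_min (lt_min hε hρ) one_pos)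
  have e3 := tsq.eventually_ge_atTop (2 * volume.real K / A)
  obtain ⟨r₀, hr₀⟩ := Filter.eventually_atTop.1
    (((e1.and e2).and e3).and (Filter.eventually_ge_atTop 3))
  refine ⟨4 * (c : ℝ) ^ 2, by positivity, r₀, fun r hr => ?_⟩
  obtain ⟨⟨⟨h1, h2⟩, h3⟩, h4⟩ := hr₀ r hr
  have hr3 : (3 : ℝ) ≤ r := by exact_mod_cast h4
  have hrpos : (0 : ℝ) < r := by linarith
  have hlog : 1 ≤ Real.log r := by
    rw [Real.le_log_iff_exp_le hrpos]
    linarith [Real.exp_one_lt_d9]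
  set θ : ℝ := (c : ℝ) * (Real.log r / r) with hθ
  have hθr : 1 / (r : ℝ) ≤ θ := by
    rw [hθ, ← mul_div_assoc]
    gcongr
    nlinarith
  have hθpos : 0 < θ := lt_of_lt_of_le (by positivity) hθr
  have hθsq : 1 / (r : ℝ) ^ 2 ≤ θ ^ 2 := by
    calc 1 / (r : ℝ) ^ 2 = (1 / (r : ℝ)) ^ 2 := by rw [div_pow, one_pow]
      _ ≤ θ ^ 2 := by gcongr
  set δ : ℝ := D / (r : ℝ) ^ 2 with hδ
  have hδpos : 0 < δ := by positivity
  have hδε : δ ≤ εK := h2.trans ((min_le_left _ _).trans (min_le_left _ _))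
  have hδρ : δ ≤ ρ := h2.trans ((min_le_left _ _).trans (min_le_right _ _))
  have hδ1 : δ ≤ 1 := h2.trans (min_le_right _ _)
  have hLδ : L * δ ≤ (M - m) * θ ^ 2 / 3 := by
    have : L * δ = (M - m) * (1 / (r : ℝ) ^ 2) / 3 := by
      rw [hδ, hD]; field_simp
    rw [this]; gcongr
  have hcosh : (r : ℝ) ^ c / 2 ≤ Real.cosh (r * θ) := by
    have h5 : (r : ℝ) * θ = c * Real.log r := by rw [hθ]; field_simp
    have h6 : Real.exp (c * Real.log r) = (r : ℝ) ^ c := by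
      rw [Real.exp_nat_mul, Real.exp_log hrpos]
    rw [h5, Real.cosh_eq, h6]
    have := Real.exp_pos (-(c * Real.log r))
    linarith
  have hVle : A / (r : ℝ) ^ (2 * N') ≤ volume.real (K ∩ Metric.closedBall x0 δ) := by
    have h5 := hvol x0 hx0 δ hδpos hδε
    have h6 : ηK * δ ^ N * v ≤ volume.real (K ∩ Metric.closedBall x0 δ) := by
      have hfin : volume (K ∩ Metric.closedBall x0 δ) ≠ ⊤ :=
        ((measure_mono inter_subset_left).trans_lt hKc.measure_lt_top).ne
      have h7 := ENNReal.toReal_mono hfin h5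
      rw [ENNReal.toReal_mul, ENNReal.toReal_ofReal (by positivity)] at h7
      exact h7
    refine le_trans ?_ h6
    have h8 : δ ^ N' ≤ δ ^ N := by
      rw [← Real.rpow_natCast]
      exact Real.rpow_le_rpow_of_exponent_ge hδpos hδ1 hN'
    calc A / (r : ℝ) ^ (2 * N') = ηK * δ ^ N' * v := by
          have haux : ∀ d : ℝ, ηK * d ^ N' * v / (r : ℝ) ^ (2 * N') =
              ηK * (d / (r : ℝ) ^ 2) ^ N' * v := by
            intro d; rw [div_pow, pow_mul]; ring
          exact haux D
      _ ≤ _ := by gcongr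
  have key := pfm_core hKc f (V := A / (r : ℝ) ^ (2 * N')) (r := r) hlt hm hM hθpos h1
    (by positivity) ?_ ?_
  · refine key.trans (le_of_eq ?_)
    rw [hθ]; field_simp
  · refine hVle.trans ?_
    apply measureReal_mono _
      ((measure_mono inter_subset_left).trans_lt hKc.measure_lt_top).ne
    intro x hx
    refine ⟨hx.1, ?_⟩
    have := hLip δ hδpos.le hδρ x hx.2
    exact this.trans (by linarith)
  · have h9 : volume.real K ≤ A * (r : ℝ) ^ 2 / 2 := by
      rw [div_le_iff₀ hApos] at h3; linarith
    refine h9.trans ?_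
    calc A * (r : ℝ) ^ 2 / 2 = 2 * (1 / (r : ℝ) ^ 2) *
          (((r : ℝ) ^ c / 2) ^ 2 * (A / (r : ℝ) ^ (2 * N'))) := by
          rw [hc]; field_simp; ring
      _ ≤ _ := by gcongr
end
end

section
/- Let K ⊆ ℝⁿ be a compact, connected set with positive Lebesgue measure satisfying Assumption 1, and let f be a real polynomial in n variables. Then there exist a constant C > 0 and r₀ ∈ ℕ such that for all r ≥ r₀, f^(r) − f_min ≤ C·(log r)²/r². -/
open MeasureTheory Polynomial Set

noncomputable section

/-- `Σ[x]_r`: n-variate polynomials that are finite sums of squares of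
polynomials of (total) degree at most `r`. -/
def MvIsSOSUpTo {n : ℕ} (σ : MvPolynomial (Fin n) ℝ) (r : ℕ) : Prop :=
  ∃ (m : ℕ) (p : Fin m → MvPolynomial (Fin n) ℝ),
    (∀ i, (p i).totalDegree ≤ r) ∧ σ = ∑ i, (p i) ^ 2

/-- The Lasserre upper bound `f^(r)` on `K` (with respect to the Lebesgue
measure restricted to `K`). -/
def lasserreBound {n : ℕ} (K : Set (EuclideanSpace ℝ (Fin n)))
    (f : MvPolynomial (Fin n) ℝ) (r : ℕ) : ℝ :=
  sInf { v : ℝ | ∃ σ : MvPolynomial (Fin n) ℝ, MvIsSOSUpTo σ r ∧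
    (∫ x in K, MvPolynomial.eval (fun i => x i) σ) = 1 ∧
    v = ∫ x in K, MvPolynomial.eval (fun i => x i) f * MvPolynomial.eval (fun i => x i) σ }

lemma aux_cheb (M θ : ℝ) (hM : 0 < M) (hθ : 0 ≤ θ) (hθ1 : θ ≤ 1) (d : ℕ) :
    ∃ q : ℝ[X], q.natDegree ≤ d ∧
      (∀ t, 2 * M * θ ^ 2 ≤ t → t ≤ M → (q.eval t) ^ 2 ≤ 1) ∧
      (∀ t, t ≤ M * θ ^ 2 → Real.exp (d * θ) / 2 ≤ q.eval t) := by
  have hev : ∀ t, ((Chebyshev.T ℝ (d : ℤ)).comp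
      (C (1 + 2 * θ ^ 2) - C (1 / M) * X)).eval t
      = (Chebyshev.T ℝ (d : ℤ)).eval (1 + 2 * θ ^ 2 - t / M) := by
    intro t
    rw [eval_comp]
    congr 1
    simp only [eval_sub, eval_mul, eval_C, eval_X]
    ring
  refine ⟨(Chebyshev.T ℝ (d : ℤ)).comp (C (1 + 2 * θ ^ 2) - C (1 / M) * X), ?_, ?_, ?_⟩
  · refine natDegree_comp_le.trans ?_
    rw [Chebyshev.natDegree_T]
    have : (C (1 + 2 * θ ^ 2) - C (1 / M) * X : ℝ[X]).natDegree ≤ 1 := by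
      compute_degree
    simpa using Nat.mul_le_mul_left d this
  · intro t h1 h2
    rw [hev, sq_le_one_iff_abs_le_one]
    apply Chebyshev.abs_eval_T_real_le_one
    have h3 : 2 * θ ^ 2 ≤ t / M := by
      rw [le_div_iff₀ hM]; linarith
    have h4 : t / M ≤ 1 := by
      rw [div_le_iff₀ hM]; linarith
    rw [abs_le]
    constructor <;> nlinarith [sq_nonneg θ]
  · intro t h1
    rw [hev]
    have h3 : t / M ≤ θ ^ 2 := by
      rw [div_le_iff₀ hM]; linarith
    set y := 1 + 2 * θ ^ 2 - t / M with hy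
    have hy1 : 1 + θ ^ 2 ≤ y := by linarith
    have hy0 : 1 ≤ y := by nlinarith [sq_nonneg θ]
    have hc : Real.cosh θ ≤ y := by
      refine (Real.cosh_le_exp_half_sq θ).trans (le_trans ?_ hy1)
      have h5 : θ ^ 2 ≤ 1 := by nlinarith
      have := Real.abs_exp_sub_one_sub_id_le (x := θ ^ 2 / 2)
        (by rw [abs_of_nonneg (by positivity)]; linarith)
      have := (abs_le.1 this).2
      nlinarith [sq_nonneg θ]
    have hφ0 := Real.arcosh_nonneg hy0
    rw [← Real.cosh_arcosh hy0] at hc ⊢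
    rw [Real.cosh_le_cosh, abs_of_nonneg hθ, abs_of_nonneg hφ0] at hc
    rw [Chebyshev.T_real_cosh]
    have : Real.cosh (d * θ) ≤ Real.cosh ((d : ℤ) * Real.arcosh y) := by
      rw [Real.cosh_le_cosh]
      push_cast
      rw [abs_of_nonneg (by positivity), abs_of_nonneg (by positivity)]
      gcongr
    refine le_trans ?_ this
    rw [Real.cosh_eq]
    have := Real.exp_pos (-(d * θ))
    linarith

lemma aux_deg {n : ℕ} (g : MvPolynomial (Fin n) ℝ) (q : ℝ[X]) :
    (Polynomial.aeval g q).totalDegree ≤ q.natDegree * g.totalDegree := by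
  rw [Polynomial.aeval_eq_sum_range]
  refine (MvPolynomial.totalDegree_finsetSum _ _).trans ?_
  refine Finset.sup_le fun i hi => ?_
  refine (MvPolynomial.totalDegree_smul_le _ _).trans ?_
  refine (MvPolynomial.totalDegree_pow _ _).trans ?_
  exact Nat.mul_le_mul_right _ (Nat.lt_succ_iff.1 (Finset.mem_range.1 hi))

lemma aux_cont {n : ℕ} (f : MvPolynomial (Fin n) ℝ) :
    Continuous (fun x : EuclideanSpace ℝ (Fin n) => MvPolynomial.eval (fun i => x i) f) := by
  have h := MvPolynomial.continuous_eval f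
  exact h.comp (by fun_prop)

lemma aux_bound {n : ℕ} (K : Set (EuclideanSpace ℝ (Fin n))) (hKc : IsCompact K)
    (f : MvPolynomial (Fin n) ℝ) (m : ℝ)
    (hm : ∀ x ∈ K, m ≤ MvPolynomial.eval (fun i => x i) f) (q : ℝ[X]) (r : ℕ)
    (hq : q.natDegree * f.totalDegree ≤ r)
    (hI : 0 < ∫ x in K, (q.eval (MvPolynomial.eval (fun i => x i) f - m)) ^ 2) :
    lasserreBound K f r - m ≤
      (∫ x in K, (MvPolynomial.eval (fun i => x i) f - m) *
        (q.eval (MvPolynomial.eval (fun i => x i) f - m)) ^ 2) /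
      (∫ x in K, (q.eval (MvPolynomial.eval (fun i => x i) f - m)) ^ 2) := by
  have hcont := aux_cont f
  have hIntK : ∀ F : EuclideanSpace ℝ (Fin n) → ℝ, Continuous F → IntegrableOn F K :=
    fun F hF => hF.continuousOn.integrableOn_compact hKc
  set I := ∫ x in K, (q.eval (MvPolynomial.eval (fun i => x i) f - m)) ^ 2 with hIdef
  have hev : ∀ x : EuclideanSpace ℝ (Fin n), MvPolynomial.eval (fun i => x i)
      ((MvPolynomial.C (1 / √I) * Polynomial.aeval (f - MvPolynomial.C m) q) ^ 2)
      = (1 / I) * (q.eval (MvPolynomial.eval (fun i => x i) f - m)) ^ 2 := by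
    intro x
    have : MvPolynomial.eval (fun i => x i) (Polynomial.aeval (f - MvPolynomial.C m) q)
        = q.eval (MvPolynomial.eval (fun i => x i) f - m) := by
      rw [Polynomial.aeval_def, Polynomial.hom_eval₂]
      have hid : (MvPolynomial.eval (fun i => x i)).comp
          (algebraMap ℝ (MvPolynomial (Fin n) ℝ)) = RingHom.id ℝ := by
        ext a
        simp [MvPolynomial.algebraMap_eq]
      rw [hid]
      simp [Polynomial.eval₂_id]
    rw [map_pow, map_mul, MvPolynomial.eval_C, this, mul_pow, div_pow, Real.sq_sqrt hI.le]
    simp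
  have hqc : Continuous fun x : EuclideanSpace ℝ (Fin n) =>
      (q.eval (MvPolynomial.eval (fun i => x i) f - m)) ^ 2 :=
    (q.continuous.comp (hcont.sub continuous_const)).pow 2
  have hle : lasserreBound K f r ≤
      ∫ x in K, MvPolynomial.eval (fun i => x i) f *
        ((1 / I) * (q.eval (MvPolynomial.eval (fun i => x i) f - m)) ^ 2) := by
    apply csInf_le
    · refine ⟨m, ?_⟩
      rintro v ⟨σ, ⟨k, p, -, rfl⟩, h1, rfl⟩
      have hσ := aux_cont (∑ i, (p i) ^ 2)
      calc m = ∫ x in K, m * MvPolynomial.eval (fun i => x i) (∑ i, (p i) ^ 2) := by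
            rw [integral_const_mul, h1, mul_one]
        _ ≤ _ := by
            refine setIntegral_mono_on (hIntK _ (continuous_const.mul hσ))
              (hIntK _ (hcont.mul hσ)) hKc.measurableSet fun x hx => ?_
            refine mul_le_mul_of_nonneg_right (hm x hx) ?_
            rw [map_sum]
            refine Finset.sum_nonneg fun i _ => ?_
            rw [map_pow]
            positivity
    · refine ⟨(MvPolynomial.C (1 / √I) * Polynomial.aeval (f - MvPolynomial.C m) q) ^ 2,
        ⟨1, fun _ => MvPolynomial.C (1 / √I) * Polynomial.aeval (f - MvPolynomial.C m) q,
          fun _ => ?_, by simp⟩, ?_, ?_⟩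
      · refine (MvPolynomial.totalDegree_mul _ _).trans ?_
        rw [MvPolynomial.totalDegree_C, zero_add]
        refine (aux_deg _ _).trans (le_trans ?_ hq)
        exact Nat.mul_le_mul_left _ (MvPolynomial.totalDegree_sub_C_le _ _)
      · simp_rw [hev]
        rw [integral_const_mul, ← hIdef]
        field_simp
      · simp_rw [hev]
  refine (sub_le_sub_right hle m).trans (le_of_eq ?_)
  have h1 : ∀ x : EuclideanSpace ℝ (Fin n), MvPolynomial.eval (fun i => x i) f *
        ((1 / I) * (q.eval (MvPolynomial.eval (fun i => x i) f - m)) ^ 2)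
      = (1 / I) * ((MvPolynomial.eval (fun i => x i) f - m) *
        (q.eval (MvPolynomial.eval (fun i => x i) f - m)) ^ 2) +
        (m / I) * (q.eval (MvPolynomial.eval (fun i => x i) f - m)) ^ 2 := by
    intro x; ring
  simp_rw [h1]
  rw [integral_add, integral_const_mul, integral_const_mul, ← hIdef]
  · field_simp
    ring
  · exact hIntK _ (continuous_const.mul ((hcont.sub continuous_const).mul hqc))
  · exact hIntK _ (continuous_const.mul hqc)

lemma aux_bound2 {n : ℕ} (K : Set (EuclideanSpace ℝ (Fin n))) (hKc : IsCompact K)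
    (f : MvPolynomial (Fin n) ℝ) (m M h h' v B : ℝ)
    (hm : ∀ x ∈ K, m ≤ MvPolynomial.eval (fun i => x i) f)
    (hM : ∀ x ∈ K, MvPolynomial.eval (fun i => x i) f - m ≤ M) (hM0 : 0 ≤ M) (hh : 0 ≤ h)
    (q : ℝ[X]) (r : ℕ)
    (hq : q.natDegree * f.totalDegree ≤ r)
    (hq1 : ∀ t, h ≤ t → t ≤ M → (q.eval t) ^ 2 ≤ 1)
    (hB : 0 < B) (hq2 : ∀ t, t ≤ h' → B ≤ q.eval t) (hv : 0 < v)
    (hvol : v ≤ volume.real (K ∩ {x | MvPolynomial.eval (fun i => x i) f - m ≤ h'})) :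
    lasserreBound K f r - m ≤ h + M * volume.real K / (v * B ^ 2) := by
  have hcont := aux_cont f
  have hIntK : ∀ F : EuclideanSpace ℝ (Fin n) → ℝ, Continuous F → IntegrableOn F K :=
    fun F hF => hF.continuousOn.integrableOn_compact hKc
  have hqc : Continuous fun x : EuclideanSpace ℝ (Fin n) =>
      (q.eval (MvPolynomial.eval (fun i => x i) f - m)) ^ 2 :=
    (q.continuous.comp (hcont.sub continuous_const)).pow 2
  have hfin : volume K ≠ ⊤ := hKc.measure_lt_top.ne
  have hS : MeasurableSet (K ∩ {x | MvPolynomial.eval (fun i => x i) f - m ≤ h'}) :=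
    hKc.measurableSet.inter
      (isClosed_le (hcont.sub continuous_const) continuous_const).measurableSet
  have hIlow : v * B ^ 2 ≤ ∫ x in K, (q.eval (MvPolynomial.eval (fun i => x i) f - m)) ^ 2 := by
    calc v * B ^ 2
        ≤ volume.real (K ∩ {x | MvPolynomial.eval (fun i => x i) f - m ≤ h'}) * B ^ 2 := by
          gcongr
      _ = ∫ x in K ∩ {x | MvPolynomial.eval (fun i => x i) f - m ≤ h'}, B ^ 2 := by
          rw [setIntegral_const, smul_eq_mul]
      _ ≤ ∫ x in K ∩ {x | MvPolynomial.eval (fun i => x i) f - m ≤ h'},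
            (q.eval (MvPolynomial.eval (fun i => x i) f - m)) ^ 2 := by
          refine setIntegral_mono_on ((hIntK _ continuous_const).mono_set inter_subset_left)
            ((hIntK _ hqc).mono_set inter_subset_left) hS fun x hx => ?_
          exact pow_le_pow_left₀ hB.le (hq2 _ hx.2) 2
      _ ≤ _ := by
          refine setIntegral_mono_set (hIntK _ hqc) ?_ ?_
          · exact Filter.Eventually.of_forall fun x => sq_nonneg _
          · exact Filter.Eventually.of_forall fun x hx => hx.1
  have hIpos : 0 < ∫ x in K, (q.eval (MvPolynomial.eval (fun i => x i) f - m)) ^ 2 :=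
    lt_of_lt_of_le (by positivity) hIlow
  refine (aux_bound K hKc f m hm q r hq hIpos).trans ?_
  have hnum : (∫ x in K, (MvPolynomial.eval (fun i => x i) f - m) *
        (q.eval (MvPolynomial.eval (fun i => x i) f - m)) ^ 2) ≤
      h * (∫ x in K, (q.eval (MvPolynomial.eval (fun i => x i) f - m)) ^ 2)
        + M * volume.real K := by
    calc _ ≤ ∫ x in K, (h * (q.eval (MvPolynomial.eval (fun i => x i) f - m)) ^ 2 + M) := by
          refine setIntegral_mono_on (hIntK _ ((hcont.sub continuous_const).mul hqc))
            (hIntK _ ((continuous_const.mul hqc).add continuous_const)) hKc.measurableSet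
            fun x hx => ?_
          have h1 := hm x hx
          have h2 := hM x hx
          rcases le_total (MvPolynomial.eval (fun i => x i) f - m) h with h3 | h3
          · have := mul_le_mul_of_nonneg_right h3
              (sq_nonneg (q.eval (MvPolynomial.eval (fun i => x i) f - m)))
            linarith
          · have h4 := hq1 _ h3 h2
            have h5 := sq_nonneg (q.eval (MvPolynomial.eval (fun i => x i) f - m))
            have h6 := mul_nonneg hh h5
            have h7 := mul_le_mul h2 h4 h5 hM0
            linarith
      _ = _ := by
          rw [integral_add, integral_const_mul, setIntegral_const, smul_eq_mul, mul_comm M]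
          · exact hIntK _ (continuous_const.mul hqc)
          · exact hIntK _ continuous_const
  have hV : 0 ≤ volume.real K := measureReal_nonneg
  calc _ ≤ _ := div_le_div_of_nonneg_right hnum hIpos.le
    _ = h + M * volume.real K /
        (∫ x in K, (q.eval (MvPolynomial.eval (fun i => x i) f - m)) ^ 2) := by
        field_simp
    _ ≤ _ := by gcongr

lemma aux_vol {n : ℕ} (K : Set (EuclideanSpace ℝ (Fin n))) (hKc : IsCompact K)
    (hK1 : Assumption1 K) (f : MvPolynomial (Fin n) ℝ) (a : EuclideanSpace ℝ (Fin n))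
    (ha : a ∈ K) :
    ∃ c h₀ N : ℝ, 0 < c ∧ 0 < h₀ ∧ 0 ≤ N ∧ ∀ h, 0 < h → h ≤ h₀ →
      c * h ^ N ≤ volume.real (K ∩ {x | MvPolynomial.eval (fun i => x i) f
        - MvPolynomial.eval (fun i => a i) f ≤ h}) := by
  obtain ⟨ε, η, N, hε, hη, hN, hball⟩ := hK1
  have hdiff : DifferentiableAt ℝ (fun x : EuclideanSpace ℝ (Fin n) =>
      MvPolynomial.eval (fun i => x i) f) a := by
    have h := (AnalyticAt.aeval_mvPolynomial (𝕜 := ℝ)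
      (f := fun (x : EuclideanSpace ℝ (Fin n)) i => x i) (z := a)
      (fun i => (EuclideanSpace.proj (𝕜 := ℝ) i).analyticAt a) f).differentiableAt
    simpa [MvPolynomial.aeval_eq_eval] using h
  obtain ⟨L, hL, hbig⟩ := hdiff.hasFDerivAt.isBigO_sub.exists_pos
  rw [Asymptotics.isBigOWith_iff] at hbig
  obtain ⟨ρ, hρ, hρb⟩ := Metric.eventually_nhds_iff.1 hbig
  set w := volume.real (Metric.ball (0 : EuclideanSpace ℝ (Fin n)) 1) with hw
  have hwpos : 0 < w := by
    rw [hw, measureReal_def]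
    exact ENNReal.toReal_pos (Metric.measure_ball_pos _ _ one_pos).ne' measure_ball_lt_top.ne
  have hN0 : 0 ≤ N := le_trans (Nat.cast_nonneg n) hN
  refine ⟨η * w / L ^ N, L * min ε (ρ / 2), N, by positivity, by positivity, hN0, ?_⟩
  intro h hh hh0
  have hδ : h / L ≤ min ε (ρ / 2) := by
    rw [div_le_iff₀ hL]; linarith
  have h1 := hball a ha (h / L) (by positivity) (hδ.trans (min_le_left _ _))
  have hsub : K ∩ Metric.closedBall a (h / L) ⊆ K ∩ {x | MvPolynomial.eval (fun i => x i) f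
        - MvPolynomial.eval (fun i => a i) f ≤ h} := by
    rintro x ⟨hxK, hx⟩
    refine ⟨hxK, ?_⟩
    have hxd : dist x a ≤ h / L := hx
    have h2 := hρb (y := x) (by
      have := hδ.trans (min_le_right _ _)
      linarith)
    have h3 : L * ‖x - a‖ ≤ h := by
      rw [← dist_eq_norm]
      calc L * dist x a ≤ L * (h / L) := by gcongr
        _ = h := by field_simp
    exact (le_abs_self _).trans (h2.trans h3)
  have h4 := h1.trans (measure_mono hsub)
  have hfin : volume (K ∩ {x | MvPolynomial.eval (fun i => x i) f
        - MvPolynomial.eval (fun i => a i) f ≤ h}) ≠ ⊤ :=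
    ((measure_mono inter_subset_left).trans_lt hKc.measure_lt_top).ne
  have h5 := ENNReal.toReal_mono hfin h4
  rw [ENNReal.toReal_mul, ENNReal.toReal_ofReal (by positivity)] at h5
  refine le_trans (le_of_eq ?_) h5
  rw [Real.div_rpow hh.le hL.le, hw, measureReal_def]
  ring

/-- Corollary 1: on a compact connected `K` of positive measure satisfying
Assumption 1, `f^(r) - f_min = O(log² r / r²)`. -/
theorem lasserre_bound_convergence_rate {n : ℕ} (K : Set (EuclideanSpace ℝ (Fin n)))
    (hKc : IsCompact K) (hKconn : IsConnected K) (hKpos : 0 < volume K)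
    (hK1 : Assumption1 K) (f : MvPolynomial (Fin n) ℝ) :
    ∃ C > (0 : ℝ), ∃ r₀ : ℕ, ∀ r : ℕ, r₀ ≤ r →
      lasserreBound K f r - sInf ((fun x => MvPolynomial.eval (fun i => x i) f) '' K) ≤
        C * (Real.log r) ^ 2 / (r : ℝ) ^ 2 := by
  obtain ⟨a, haK, hamin⟩ := hKc.exists_isMinOn hKconn.nonempty (aux_cont f).continuousOn
  obtain ⟨b, hbK, hbmax⟩ := hKc.exists_isMaxOn hKconn.nonempty (aux_cont f).continuousOn
  have hmin : sInf ((fun x : EuclideanSpace ℝ (Fin n) =>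
      MvPolynomial.eval (fun i => x i) f) '' K) = MvPolynomial.eval (fun i => a i) f := by
    apply IsLeast.csInf_eq
    refine ⟨⟨a, haK, rfl⟩, ?_⟩
    rintro _ ⟨x, hx, rfl⟩
    exact hamin hx
  rw [hmin]
  set m := MvPolynomial.eval (fun i => a i) f with hm
  have hmle : ∀ x ∈ K, m ≤ MvPolynomial.eval (fun i => x i) f := fun x hx => hamin hx
  set M := MvPolynomial.eval (fun i => b i) f - m + 1 with hMdef
  have hMpos : 0 < M := by
    have := hmle b hbK
    linarith
  have hMle : ∀ x ∈ K, MvPolynomial.eval (fun i => x i) f - m ≤ M := by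
    intro x hx
    have : MvPolynomial.eval (fun i => x i) f ≤ MvPolynomial.eval (fun i => b i) f := hbmax hx
    linarith
  obtain ⟨c, h₀, N, hc, hh₀, hN, hvol⟩ := aux_vol K hKc hK1 f a haK
  set D : ℕ := f.totalDegree + 1 with hD
  have hD1 : (1 : ℝ) ≤ D := by rw [hD]; push_cast; linarith [Nat.cast_nonneg (α := ℝ) f.totalDegree]
  set A : ℝ := D * (2 * N + 2) with hA
  have hA1 : 1 ≤ A := by nlinarith
  have hV : 0 ≤ volume.real K := measureReal_nonneg
  have hlim : Filter.Tendsto (fun r : ℕ => A * (Real.log r / r)) Filter.atTop (nhds 0) := by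
    have h1 : Filter.Tendsto (fun x : ℝ => Real.log x / x) Filter.atTop (nhds 0) :=
      Real.isLittleO_log_id_atTop.tendsto_div_nhds_zero
    simpa using (h1.comp tendsto_natCast_atTop_atTop).const_mul A
  have hlim2 : Filter.Tendsto (fun r : ℕ => M * (A * (Real.log r / r)) ^ 2) Filter.atTop
      (nhds 0) := by
    simpa using (hlim.pow 2).const_mul M
  have hlog : ∀ᶠ r : ℕ in Filter.atTop, 1 ≤ Real.log r :=
    (Real.tendsto_log_atTop.comp tendsto_natCast_atTop_atTop).eventually_ge_atTop 1
  obtain ⟨r₀, hr₀⟩ := Filter.eventually_atTop.1 ((hlim.eventually_le_const one_pos).and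
    ((hlim2.eventually_le_const hh₀).and (hlog.and (Filter.eventually_ge_atTop D))))
  refine ⟨2 * M * A ^ 2 + 4 * (M * volume.real K) / (c * M ^ N), by positivity, r₀, ?_⟩
  intro r hr
  obtain ⟨hθ1, hθh, hl, hrD⟩ := hr₀ r hr
  have hrpos : (0 : ℝ) < r := by
    have : (D : ℝ) ≤ r := by exact_mod_cast hrD
    linarith
  set θ : ℝ := A * (Real.log r / r) with hθ
  have hlpos : 0 < Real.log r := by linarith
  have hθpos : 0 < θ := by positivity
  set d : ℕ := r / D with hd
  obtain ⟨q, hq0, hq1, hq2⟩ := aux_cheb M θ hMpos hθpos.le hθ1 d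
  have hdeg : q.natDegree * f.totalDegree ≤ r := by
    calc q.natDegree * f.totalDegree ≤ d * D := Nat.mul_le_mul hq0 (Nat.le_succ _)
      _ ≤ r := Nat.div_mul_le_self r D
  have hmain := aux_bound2 K hKc f m M (2 * M * θ ^ 2) (M * θ ^ 2) (c * (M * θ ^ 2) ^ N)
    (Real.exp (d * θ) / 2) hmle hMle hMpos.le (by positivity) q r hdeg hq1 (by positivity) hq2
    (by positivity) (hvol _ (by positivity) hθh)
  refine hmain.trans ?_
  have hd2 : (r : ℝ) ≤ 2 * D * d := by
    have h1 : r < D * d + D := by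
      have := Nat.lt_mul_div_succ r (show 0 < D by omega)
      rw [← hd] at this
      linarith [this]
    have h2 : 1 ≤ d := (Nat.one_le_div_iff (by omega)).2 hrD
    have h3 : r ≤ 2 * D * d := by nlinarith
    exact_mod_cast h3
  have hexp : (r : ℝ) ^ (2 * N + 2) ≤ Real.exp (d * θ) ^ 2 := by
    rw [← Real.exp_nat_mul, Real.rpow_def_of_pos hrpos]
    apply Real.exp_le_exp.2
    have h1 : ((2 : ℕ) : ℝ) * (d * θ) = (2 * D * d / r) * ((2 * N + 2) * Real.log r) := by
      rw [hθ, hA]; push_cast; ring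
    have h2 : 1 ≤ 2 * D * d / (r : ℝ) := by
      rw [le_div_iff₀ hrpos]; linarith
    rw [h1]
    have h3 : 0 ≤ (2 * N + 2) * Real.log r := by positivity
    nlinarith
  have hθr : (1 / (r : ℝ)) ≤ θ := by
    rw [hθ, ← mul_div_assoc]
    gcongr
    nlinarith
  have hpow : (r : ℝ) ^ (-(2 * N)) ≤ (θ ^ 2) ^ N := by
    have h1 : ((1 / (r : ℝ)) ^ 2) ^ N ≤ (θ ^ 2) ^ N := by gcongr
    refine le_trans (le_of_eq ?_) h1
    rw [Real.rpow_neg hrpos.le, one_div, inv_pow, Real.inv_rpow (by positivity),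
      ← Real.rpow_natCast (r : ℝ) 2, ← Real.rpow_mul hrpos.le]
    norm_num
  have hprod : (r : ℝ) ^ 2 ≤ (θ ^ 2) ^ N * Real.exp (d * θ) ^ 2 := by
    calc (r : ℝ) ^ 2 = (r : ℝ) ^ (-(2 * N)) * (r : ℝ) ^ (2 * N + 2) := by
          rw [← Real.rpow_add hrpos, ← Real.rpow_natCast (r : ℝ) 2]
          congr 1
          push_cast; ring
      _ ≤ _ := by gcongr
  have hden : c * M ^ N * (r : ℝ) ^ 2 / 4 ≤
      c * (M * θ ^ 2) ^ N * (Real.exp (d * θ) / 2) ^ 2 := by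
    rw [Real.mul_rpow hMpos.le (by positivity)]
    have := mul_le_mul_of_nonneg_left hprod (show 0 ≤ c * M ^ N / 4 by positivity)
    calc _ = c * M ^ N / 4 * (r : ℝ) ^ 2 := by ring
      _ ≤ _ := this
      _ = _ := by ring
  calc 2 * M * θ ^ 2 + M * volume.real K /
        (c * (M * θ ^ 2) ^ N * (Real.exp (d * θ) / 2) ^ 2)
      ≤ 2 * M * θ ^ 2 + M * volume.real K / (c * M ^ N * (r : ℝ) ^ 2 / 4) := by
        gcongr
    _ = (2 * M * A ^ 2 * (Real.log r) ^ 2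
          + 4 * (M * volume.real K) / (c * M ^ N) * 1) / (r : ℝ) ^ 2 := by
        rw [hθ]; field_simp
    _ ≤ (2 * M * A ^ 2 * (Real.log r) ^ 2
          + 4 * (M * volume.real K) / (c * M ^ N) * (Real.log r) ^ 2) / (r : ℝ) ^ 2 := by
        gcongr
        nlinarith
    _ = _ := by ring
end
end

section
/- Let K = [−1, 1] ⊆ ℝ and f(x) = x (so f_min = −1). Then there exist constants c, C > 0 and r₀ ∈ ℕ such that for all r ≥ r₀, −1 + c/r² ≤ f^(r) ≤ −1 + C/r². -/
open MeasureTheory Polynomial Set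

noncomputable section

/-- The Lasserre upper bound `f^(r)` for a univariate polynomial `f` on
`K = [-1,1]`, with respect to the Lebesgue measure restricted to `[-1,1]`. -/
def lasserreBound1 (f : Polynomial ℝ) (r : ℕ) : ℝ :=
  sInf { v : ℝ | ∃ σ : Polynomial ℝ, IsSOSUpTo σ r ∧
    (∫ x in Icc (-1 : ℝ) 1, σ.eval x) = 1 ∧
    v = ∫ x in Icc (-1 : ℝ) 1, f.eval x * σ.eval x }


/-- Integral over `[-1,1]` as a linear functional on polynomials. -/
def polyInt : ℝ[X] →ₗ[ℝ] ℝ where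
  toFun p := ∫ x in (-1:ℝ)..1, p.eval x
  map_add' p q := by
    simp only [eval_add]
    exact intervalIntegral.integral_add (p.continuous.intervalIntegrable _ _)
      (q.continuous.intervalIntegrable _ _)
  map_smul' c p := by
    simp only [eval_smul, smul_eq_mul, RingHom.id_apply]
    exact intervalIntegral.integral_const_mul _ _

theorem polyInt_def (p : ℝ[X]) : polyInt p = ∫ x in (-1:ℝ)..1, p.eval x := rfl

theorem polyInt_derivative (p : ℝ[X]) : polyInt (derivative p) = p.eval 1 - p.eval (-1) := by
  rw [polyInt_def]
  exact intervalIntegral.integral_eq_sub_of_hasDerivAt (fun x _ => p.hasDerivAt x)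
    ((derivative p).continuous.intervalIntegrable _ _)

theorem polyInt_mono {p q : ℝ[X]} (h : ∀ x ∈ Icc (-1:ℝ) 1, p.eval x ≤ q.eval x) :
    polyInt p ≤ polyInt q := by
  rw [polyInt_def, polyInt_def]
  exact intervalIntegral.integral_mono_on (by norm_num) (p.continuous.intervalIntegrable _ _)
      (q.continuous.intervalIntegrable _ _) h

theorem polyInt_nonneg {p : ℝ[X]} (h : ∀ x ∈ Icc (-1:ℝ) 1, 0 ≤ p.eval x) :
    0 ≤ polyInt p := by
  have := polyInt_mono (p := 0) (q := p) (by simpa using h)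
  simpa using this

theorem polyInt_sq_nonneg (p : ℝ[X]) : 0 ≤ polyInt (p * p) :=
  polyInt_nonneg (fun x _ => by rw [eval_mul]; exact mul_self_nonneg _)

theorem polyInt_sq_eq_zero {p : ℝ[X]} (h : polyInt (p * p) = 0) : p = 0 := by
  by_contra hp
  have hfin : (p.roots.toFinset : Set ℝ).Finite := Finset.finite_toSet _
  obtain ⟨c, hc, hc'⟩ := ((Ioo_infinite (show (-1:ℝ) < 1 by norm_num)).sdiff hfin).nonempty
  have hce : p.eval c ≠ 0 := by
    intro h0; apply hc'; simp [hp, h0]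
  have : 0 < ∫ x in (-1:ℝ)..1, (p * p).eval x := by
    apply intervalIntegral.integral_pos (by norm_num) (p * p).continuous.continuousOn
    · intro x _; rw [eval_mul]; exact mul_self_nonneg _
    · exact ⟨c, ⟨hc.1.le, hc.2.le⟩, by rw [eval_mul]; exact mul_self_pos.2 hce⟩
  rw [polyInt_def] at h
  linarith

/-- The Legendre operator. -/
def legOp (p : ℝ[X]) : ℝ[X] := -derivative ((1 - X ^ 2) * derivative p)

theorem legOp_coeff (p : ℝ[X]) (k : ℕ) : (legOp p).coeff k =
    k * (k + 1) * p.coeff k - (k + 1) * (k + 2) * p.coeff (k + 2) := by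
  have : legOp p = derivative (X * (X * derivative p)) - derivative (derivative p) := by
    rw [legOp, ← derivative_sub, ← derivative_neg]; congr 1; ring
  rw [this, coeff_sub, coeff_derivative, coeff_derivative, coeff_derivative, coeff_X_mul]
  cases k with
  | zero => simp; ring
  | succ j => rw [coeff_X_mul, coeff_derivative]; push_cast; ring

theorem legOp_degree {p : ℝ[X]} {n : ℕ} (h : p.degree < n) : (legOp p).degree < n := by
  rw [degree_lt_iff_coeff_zero] at h ⊢
  intro m hm
  rw [legOp_coeff, h m hm, h (m + 2) (by omega)]; ring

theorem legOp_energy (p q : ℝ[X]) :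
    polyInt ((1 - X ^ 2) * derivative p * derivative q) = polyInt (legOp p * q) := by
  have h := polyInt_derivative ((1 - X ^ 2) * derivative p * q)
  rw [derivative_mul (f := (1 - X ^ 2) * derivative p), map_add] at h
  have z : ((1 - X ^ 2) * derivative p * q).eval 1 - ((1 - X ^ 2) * derivative p * q).eval (-1) = 0 := by simp
  rw [z] at h
  rw [legOp, neg_mul, map_neg]
  linarith

theorem legOp_symm (p q : ℝ[X]) : polyInt (legOp p * q) = polyInt (p * legOp q) := by
  rw [← legOp_energy, mul_comm p, ← legOp_energy]; congr 1; ring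

theorem exists_orth (n : ℕ) : ∃ q : ℝ[X], q.degree < n ∧
    ∀ s : ℝ[X], s.degree < n → polyInt ((X ^ n - q) * s) = 0 := by
  let V := degreeLT ℝ n
  let Φ : V →ₗ[ℝ] Module.Dual ℝ V :=
    (((LinearMap.mul ℝ ℝ[X]).compr₂ polyInt).compl₁₂ V.subtype V.subtype)
  have : FiniteDimensional ℝ V := Module.Finite.equiv (degreeLTEquiv ℝ n).symm
  have hinj : Function.Injective Φ := by
    rw [← LinearMap.ker_eq_bot, LinearMap.ker_eq_bot']
    intro v hv
    have h1 : Φ v v = 0 := by rw [hv]; rfl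
    have h2 : polyInt ((v : ℝ[X]) * v) = 0 := h1
    exact Subtype.ext (polyInt_sq_eq_zero h2)
  have hsur : Function.Surjective Φ :=
    (LinearMap.injective_iff_surjective_of_finrank_eq_finrank
      (Subspace.dual_finrank_eq (K := ℝ) (V := V)).symm).1 hinj
  obtain ⟨q, hq⟩ := hsur ((polyInt ∘ₗ LinearMap.mul ℝ ℝ[X] (X ^ n)) ∘ₗ V.subtype)
  refine ⟨q, mem_degreeLT.1 q.2, fun s hs => ?_⟩
  have h1 := LinearMap.congr_fun hq ⟨s, mem_degreeLT.2 hs⟩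
  have h2 : polyInt ((q : ℝ[X]) * s) = polyInt (X ^ n * s) := h1
  rw [sub_mul, map_sub, h2, sub_self]

theorem bernsteinL2 (n : ℕ) : ∀ p : ℝ[X], p.degree < n →
    polyInt ((1 - X ^ 2) * derivative p * derivative p) ≤ n * (n - 1) * polyInt (p * p) := by
  induction n with
  | zero =>
    intro p hp
    have : p = 0 := by simpa using hp
    simp [this]
  | succ n ih =>
    intro p hp
    obtain ⟨q0, hq0, horth⟩ := exists_orth n
    set P : ℝ[X] := X ^ n - q0 with hP
    have hq0c := (degree_lt_iff_coeff_zero _ _).1 hq0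
    have hPn : P.coeff n = 1 := by simp [hP, hq0c n le_rfl]
    have hPk : ∀ k, n < k → P.coeff k = 0 := fun k hk => by
      simp [hP, hq0c k hk.le, coeff_X_pow, hk.ne']
    have hR : legOp P = C ((n:ℝ) * (n + 1)) * P := by
      rw [← sub_eq_zero]
      set R := legOp P - C ((n:ℝ) * (n + 1)) * P with hRd
      have hRdeg : R.degree < n := by
        rw [degree_lt_iff_coeff_zero]
        intro k hk
        rw [hRd, coeff_sub, legOp_coeff, coeff_C_mul, hPk (k + 2) (by omega)]
        rcases hk.eq_or_lt with rfl | hk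
        · ring
        · rw [hPk k hk]; ring
      apply polyInt_sq_eq_zero
      nth_rewrite 1 [hRd]
      rw [sub_mul, map_sub, legOp_symm, horth _ (legOp_degree hRdeg), mul_assoc, ← smul_eq_C_mul,
        map_smul, horth _ hRdeg]
      simp
    set a := p.coeff n
    set q := p - C a * P with hq
    have hpc := (degree_lt_iff_coeff_zero _ _).1 hp
    have hqd : q.degree < n := by
      rw [degree_lt_iff_coeff_zero]
      intro k hk
      rw [hq, coeff_sub, coeff_C_mul]
      rcases hk.eq_or_lt with rfl | hk
      · rw [hPn]; ring
      · rw [hPk k hk, hpc k hk]; ring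
    have hpq : p = C a * P + q := by rw [hq]; ring
    have hlP : ∀ s, polyInt (legOp P * s) = (n:ℝ) * (n + 1) * polyInt (P * s) := fun s => by
      rw [hR, mul_assoc, ← smul_eq_C_mul, map_smul, smul_eq_mul]
    have e1 : polyInt (p * p) = a ^ 2 * polyInt (P * P) + polyInt (q * q) := by
      have : p * p = (a ^ 2) • (P * P) + (2 * a) • (P * q) + q * q := by
        rw [hpq, smul_eq_C_mul, smul_eq_C_mul, C_pow, C_mul]
        rw [show (C 2 : ℝ[X]) = 2 from rfl]; ring
      rw [this, map_add, map_add, map_smul, map_smul, horth q hqd]; simp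
    have e2 : polyInt ((1 - X ^ 2) * derivative p * derivative p) =
        a ^ 2 * (n * (n + 1) * polyInt (P * P)) +
          polyInt ((1 - X ^ 2) * derivative q * derivative q) := by
      have : (1 - X ^ 2) * derivative p * derivative p =
          (a ^ 2) • ((1 - X ^ 2) * derivative P * derivative P)
          + (2 * a) • ((1 - X ^ 2) * derivative P * derivative q)
          + (1 - X ^ 2) * derivative q * derivative q := by
        have hd : derivative p = C a * derivative P + derivative q := by
          rw [hpq]; simp
        rw [hd, smul_eq_C_mul, smul_eq_C_mul, C_pow, C_mul]
        rw [show (C 2 : ℝ[X]) = 2 from rfl]; ring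
      rw [this, map_add, map_add, map_smul, map_smul, legOp_energy P P, legOp_energy P q, hlP, hlP,
        horth q hqd]; simp
    rw [e1, e2]
    have h3 := ih q hqd
    have h4 := polyInt_sq_nonneg q
    have h5 : 0 ≤ (n:ℝ) * polyInt (q * q) := by positivity
    push_cast
    nlinarith

theorem lower_one {r : ℕ} (hr : 1 ≤ r) {p : ℝ[X]} (hp : p.natDegree ≤ r) :
    polyInt (p * p) * (1 / 6 / (r:ℝ) ^ 2) ≤ polyInt ((1 + X) * (p * p)) := by
  have hd : p.degree < ((r + 1 : ℕ) : WithBot ℕ) :=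
    lt_of_le_of_lt degree_le_natDegree (by exact_mod_cast Nat.lt_succ_of_le hp)
  have hb := bernsteinL2 (r + 1) p hd
  push_cast at hb
  have hr' : (1:ℝ) ≤ r := by exact_mod_cast hr
  have h0 := polyInt_derivative ((1 - X ^ 2) * (p * p))
  have h1 : derivative ((1 - X ^ 2) * (p * p)) =
      (2:ℝ) • (p * p) - (2:ℝ) • ((1 + X) * (p * p)) + (2:ℝ) • ((1 - X ^ 2) * (p * derivative p)) := by
    simp only [smul_eq_C_mul, show (C 2 : ℝ[X]) = 2 from rfl]
    simp; ring
  rw [h1] at h0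
  simp only [map_add, map_sub, map_smul, smul_eq_mul, eval_mul, eval_sub, eval_one, eval_pow,
    eval_X] at h0
  norm_num at h0
  set A : ℝ := r * (r + 1) / 2 with hA
  have hA0 : 0 < A := by positivity
  have h2 : polyInt (-((1 - X ^ 2) * (p * derivative p))) ≤
      polyInt ((2 * A) • ((1 + X) * (p * p)) +
        (1 / (4 * A)) • ((1 - X ^ 2) * derivative p * derivative p)) := by
    apply polyInt_mono
    intro x hx
    simp only [eval_neg, eval_add, eval_mul, eval_sub, eval_one, eval_pow, eval_X, eval_smul,
      smul_eq_mul]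
    set u := p.eval x
    set v := (derivative p).eval x
    have hx1 : 0 ≤ 1 + x := by linarith [hx.1]
    have hx2 : 0 ≤ 1 - x := by linarith [hx.2]
    have h3 : 0 ≤ (1 - x ^ 2) * (A * (u + v / (2 * A)) ^ 2) := by
      have : 0 ≤ 1 - x ^ 2 := by nlinarith
      positivity
    have h4 : 0 ≤ (1 + x) ^ 2 * A * u ^ 2 := by positivity
    have h5 : A * (u + v / (2 * A)) ^ 2 = A * u ^ 2 + u * v + 1 / (4 * A) * v ^ 2 := by
      field_simp; ring
    rw [h5] at h3
    nlinarith
  simp only [map_add, map_neg, map_smul, smul_eq_mul] at h2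
  have hN := polyInt_sq_nonneg p
  set N := polyInt (p * p)
  set E := polyInt ((1 + X) * (p * p))
  have h6 : 1 / (4 * A) * polyInt ((1 - X ^ 2) * derivative p * derivative p) ≤ N / 2 := by
    calc _ ≤ 1 / (4 * A) * ((r + 1) * (r + 1 - 1) * N) := by gcongr
      _ = N / 2 := by rw [hA]; field_simp; ring
  have h7 : N / 2 ≤ E * (1 + r * (r + 1)) := by
    have : 2 * A = r * (r + 1) := by rw [hA]; ring
    rw [this] at h2
    linarith
  have hE : 0 ≤ E := by
    by_contra h; push Not at h
    have : E * (1 + r * (r + 1)) < 0 := mul_neg_of_neg_of_pos h (by positivity)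
    linarith
  rw [div_div, mul_one_div, div_le_iff₀ (by positivity)]
  nlinarith [mul_nonneg hE (show (0:ℝ) ≤ 3 * r ^ 2 - (1 + r * (r + 1)) by nlinarith)]

theorem polyInt_Icc (p : ℝ[X]) : (∫ x in Icc (-1:ℝ) 1, p.eval x) = polyInt p := by
  rw [polyInt_def, intervalIntegral.integral_of_le (by norm_num), integral_Icc_eq_integral_Ioc]

theorem lower_sos {r : ℕ} (hr : 1 ≤ r) {s : ℝ[X]} (hs : IsSOSUpTo s r) :
    polyInt s * (1 / 6 / (r:ℝ) ^ 2) ≤ polyInt ((1 + X) * s) := by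
  obtain ⟨m, p, hp, rfl⟩ := hs
  rw [Finset.mul_sum, map_sum, map_sum, Finset.sum_mul]
  refine Finset.sum_le_sum fun i _ => ?_
  rw [sq (p i)]
  exact lower_one hr (hp i)

theorem abs_sin_nat_mul (m : ℕ) (y : ℝ) : |Real.sin (m * y)| ≤ m * |Real.sin y| := by
  induction m with
  | zero => simp
  | succ k ih =>
    push_cast
    rw [add_mul, one_mul, Real.sin_add]
    have h1 : |Real.sin (k * y) * Real.cos y| ≤ |Real.sin (k * y)| := by
      rw [abs_mul]; exact mul_le_of_le_one_right (abs_nonneg _) (Real.abs_cos_le_one y)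
    have h2 : |Real.cos (k * y) * Real.sin y| ≤ |Real.sin y| := by
      rw [abs_mul]; exact mul_le_of_le_one_left (abs_nonneg _) (Real.abs_cos_le_one _)
    calc _ ≤ |Real.sin (k * y) * Real.cos y| + |Real.cos (k * y) * Real.sin y| := abs_add_le _ _
      _ ≤ _ := by linarith

theorem one_sub_cos_nat_mul (m : ℕ) (y : ℝ) :
    1 - Real.cos (m * y) ≤ (m:ℝ) ^ 2 * (1 - Real.cos y) := by
  have h : ∀ z : ℝ, 1 - Real.cos z = 2 * |Real.sin (z / 2)| ^ 2 := fun z => by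
    rw [sq_abs, Real.sin_sq_eq_half_sub, mul_div_cancel₀ z two_ne_zero]; ring
  rw [h, h, mul_div_assoc]
  have h1 := abs_sin_nat_mul m (y / 2)
  have h2 : |Real.sin (m * (y / 2))| ^ 2 ≤ (m * |Real.sin (y / 2)|) ^ 2 := by gcongr
  linarith [mul_pow (m:ℝ) |Real.sin (y / 2)| 2]

/-- Fejér-type kernel. -/
theorem exists_kernel (m : ℕ) (hm : 1 ≤ m) : ∃ G : ℝ[X], G.natDegree ≤ m - 1 ∧
    ∀ x : ℝ, (1 + x) * G.eval x = 1 - (Chebyshev.T ℝ m).eval (-x) := by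
  have hroot : (1 - (Chebyshev.T ℝ m).comp (-X)).IsRoot (-1 : ℝ) := by
    simp [IsRoot.def]
  obtain ⟨G, hG⟩ := dvd_iff_isRoot.2 hroot
  refine ⟨G, ?_, fun x => ?_⟩
  · by_cases h0 : G = 0
    · simp [h0]
    have h1 : (1 - (Chebyshev.T ℝ m).comp (-X)).natDegree ≤ m := by
      refine (natDegree_sub_le _ _).trans ?_
      simp [natDegree_comp]
    rw [hG, natDegree_mul (X_sub_C_ne_zero _) h0, natDegree_X_sub_C] at h1
    omega
  · have := congrArg (eval x) hG
    simp only [eval_sub, eval_one, eval_comp, eval_neg, eval_X, eval_mul, eval_C] at this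
    rw [this]; ring

theorem kernel_bounds {m : ℕ} (hm : 1 ≤ m) {G : ℝ[X]}
    (hG : ∀ x : ℝ, (1 + x) * G.eval x = 1 - (Chebyshev.T ℝ m).eval (-x))
    {x : ℝ} (h1 : -1 < x) (h2 : x ≤ 1) :
    0 ≤ G.eval x ∧ G.eval x * (1 + (m:ℝ) ^ 2 * (1 + x)) ≤ 3 * (m:ℝ) ^ 2 ∧
      (1 + x ≤ 2 / (m:ℝ) ^ 2 → 2 / 5 * (m:ℝ) ^ 2 ≤ G.eval x) := by
  have hm' : (1:ℝ) ≤ m := by exact_mod_cast hm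
  have ht : 0 < 1 + x := by linarith
  set y := Real.arccos (-x) with hy
  have hcos : Real.cos y = -x := Real.cos_arccos (by linarith) (by linarith)
  have hy0 : 0 ≤ y := Real.arccos_nonneg _
  have hypi : y ≤ Real.pi := Real.arccos_le_pi _
  have hx := hG x
  have hT := Chebyshev.T_real_cos y (m : ℤ)
  rw [hcos] at hT
  rw [hT] at hx
  push_cast at hx
  have htc : 1 + x = 1 - Real.cos y := by rw [hcos]; ring
  set g := G.eval x
  have hg0 : 0 ≤ g := by
    have : 0 ≤ (1 + x) * g := by rw [hx]; linarith [Real.cos_le_one (m * y)]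
    exact nonneg_of_mul_nonneg_right this ht
  have hgm : g ≤ (m:ℝ) ^ 2 := by
    have := one_sub_cos_nat_mul m y
    rw [← hx, ← htc] at this
    nlinarith
  have hg2 : (1 + x) * g ≤ 2 := by rw [hx]; linarith [Real.neg_one_le_cos (m * y)]
  refine ⟨hg0, by nlinarith [sq_nonneg (m:ℝ)], fun hsm => ?_⟩
  have hpi := Real.pi_pos
  have hpi2 : Real.pi ^ 2 ≤ 10 := by nlinarith [Real.pi_lt_d2]
  have hc := Real.cos_le_one_sub_mul_cos_sq (x := y) (by rwa [abs_of_nonneg hy0])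
  have hmy : m * y ≤ Real.pi := by
    have h3 : 2 / Real.pi ^ 2 * y ^ 2 ≤ 2 / (m:ℝ) ^ 2 := by linarith
    rw [div_mul_eq_mul_div, div_le_div_iff₀ (by positivity) (by positivity)] at h3
    apply le_of_sq_le_sq _ hpi.le
    nlinarith
  have hc2 := Real.cos_le_one_sub_mul_cos_sq (x := m * y) (by rwa [abs_of_nonneg (by positivity)])
  have hc3 := Real.one_sub_sq_div_two_le_cos (x := y)
  have h4 : 2 / Real.pi ^ 2 * (m * y) ^ 2 ≤ (1 + x) * g := by rw [hx]; linarith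
  have h5 : 2 / 10 ≤ 2 / Real.pi ^ 2 := by gcongr
  have h6 : 2 / 10 * (m * y) ^ 2 ≤ (1 + x) * g :=
    le_trans (by gcongr) h4
  have h7 : 2 / 5 * (m:ℝ) ^ 2 * (1 + x) ≤ (1 + x) * g := by
    have : 2 / 5 * (m:ℝ) ^ 2 * (1 + x) ≤ 2 / 5 * (m:ℝ) ^ 2 * (y ^ 2 / 2) := by
      gcongr; linarith
    nlinarith
  nlinarith

theorem upper_test (m : ℕ) (hm : 1 ≤ m) : ∃ G : ℝ[X], G.natDegree ≤ m - 1 ∧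
    0 < polyInt (G ^ 4) ∧ polyInt ((1 + X) * G ^ 4) ≤ 1000 / (m:ℝ) ^ 2 * polyInt (G ^ 4) := by
  obtain ⟨G, hd, hG⟩ := exists_kernel m hm
  have hm' : (1:ℝ) ≤ m := by exact_mod_cast hm
  have hm2 : (1:ℝ) ≤ (m:ℝ) ^ 2 := by nlinarith
  set M : ℝ := (m:ℝ) ^ 2 with hM
  have hM0 : 0 < M := by linarith
  have hN : 2 / M * (2 / 5 * M) ^ 4 ≤ polyInt (G ^ 4) := by
    have hle : 2 / M ≤ 2 := by rw [div_le_iff₀ hM0]; linarith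
    have hpos : 0 < 2 / M := by positivity
    have hi : ∀ a b, IntervalIntegrable (fun x => (G ^ 4).eval x) volume a b :=
      fun a b => (G ^ 4).continuous.intervalIntegrable a b
    rw [polyInt_def, ← intervalIntegral.integral_add_adjacent_intervals (hi _ (-1 + 2 / M)) (hi _ _)]
    have h1 : 0 ≤ ∫ x in (-1 + 2 / M)..1, (G ^ 4).eval x := by
      apply intervalIntegral.integral_nonneg (by linarith)
      intro x _; rw [eval_pow]; positivity
    have h2 : (∫ x in (-1:ℝ)..(-1 + 2 / M), (2 / 5 * M) ^ 4) ≤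
        ∫ x in (-1:ℝ)..(-1 + 2 / M), (G ^ 4).eval x := by
      apply intervalIntegral.integral_mono_on_of_le_Ioo (by linarith) (by simp) (hi _ _)
      intro x hx
      rw [eval_pow]
      have := (kernel_bounds hm hG hx.1 (by linarith [hx.2])).2.2 (by linarith [hx.2])
      gcongr
    rw [intervalIntegral.integral_const, smul_eq_mul] at h2
    have e : (-1 + 2 / M - -1) = 2 / M := by ring
    rw [e] at h2
    linarith
  have hE : polyInt ((1 + X) * G ^ 4) ≤ 81 * M ^ 2 / 2 := by
    have hpos : ∀ x ∈ Icc (-1:ℝ) 1, 0 < 1 + M * (1 + x) := fun x hx => by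
      have : 0 ≤ 1 + x := by linarith [hx.1]
      positivity
    have hu : uIcc (-1:ℝ) 1 = Icc (-1) 1 := uIcc_of_le (by norm_num)
    have hcont : ContinuousOn (fun x : ℝ => 81 * M ^ 3 / (1 + M * (1 + x)) ^ 3) (uIcc (-1) 1) := by
      rw [hu]
      apply ContinuousOn.div (by fun_prop) (by fun_prop)
      intro x hx; exact (pow_pos (hpos x hx) 3).ne'
    have hI := intervalIntegral.integral_eq_sub_of_hasDerivAt (a := -1) (b := 1)
      (f := fun x : ℝ => -(81 * M ^ 2 / 2) / (1 + M * (1 + x)) ^ 2)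
      (f' := fun x : ℝ => 81 * M ^ 3 / (1 + M * (1 + x)) ^ 3)
      (fun x hx => by
        rw [hu] at hx
        have hp := hpos x hx
        have hl : HasDerivAt (fun x : ℝ => 1 + M * (1 + x)) M x := by
          simpa using (((hasDerivAt_id x).const_add 1).const_mul M).const_add 1
        have := (hasDerivAt_const x (-(81 * M ^ 2 / 2))).div (hl.pow 2) (pow_pos hp 2).ne'
        refine HasDerivAt.congr_deriv (f := fun x : ℝ => -(81 * M ^ 2 / 2) / (1 + M * (1 + x)) ^ 2) this ?_
        simp only [Pi.pow_apply]
        field_simp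
        try norm_num
        try ring) hcont.intervalIntegrable
    have hle : polyInt ((1 + X) * G ^ 4) ≤ ∫ x in (-1:ℝ)..1, 81 * M ^ 3 / (1 + M * (1 + x)) ^ 3 := by
      rw [polyInt_def]
      apply intervalIntegral.integral_mono_on_of_le_Ioo (by norm_num)
        (((1 + X) * G ^ 4).continuous.intervalIntegrable _ _) hcont.intervalIntegrable
      intro x hx
      have hp := hpos x ⟨hx.1.le, hx.2.le⟩
      obtain ⟨hg0, hg, -⟩ := kernel_bounds hm hG hx.1 hx.2.le
      simp only [eval_mul, eval_add, eval_one, eval_X, eval_pow]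
      set g := G.eval x
      rw [le_div_iff₀ (by positivity)]
      have h4 : (g * (1 + M * (1 + x))) ^ 4 ≤ (3 * M) ^ 4 := by gcongr
      have h5 : M * (1 + x) ≤ 1 + M * (1 + x) := by linarith
      have h6 : M * ((1 + x) * g ^ 4 * (1 + M * (1 + x)) ^ 3) ≤ M * (81 * M ^ 3) := by
        calc _ = (M * (1 + x)) * (g ^ 4 * (1 + M * (1 + x)) ^ 3) := by ring
          _ ≤ (1 + M * (1 + x)) * (g ^ 4 * (1 + M * (1 + x)) ^ 3) := by gcongr
          _ = (g * (1 + M * (1 + x))) ^ 4 := by ring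
          _ ≤ (3 * M) ^ 4 := h4
          _ = _ := by ring
      exact le_of_mul_le_mul_left h6 hM0
    rw [hI] at hle
    have h7 : 0 ≤ (81 * M ^ 2 / 2) / (1 + M * (1 + 1)) ^ 2 := by positivity
    norm_num [neg_div] at hle h7 ⊢
    linarith
  refine ⟨G, hd, lt_of_lt_of_le (by positivity) hN, hE.trans ?_⟩
  calc 81 * M ^ 2 / 2 ≤ 1000 / M * (2 / M * (2 / 5 * M) ^ 4) := by
        field_simp; norm_num
    _ ≤ _ := by gcongr

theorem lasserre_bound_x_theta :
    ∃ c > (0 : ℝ), ∃ C > (0 : ℝ), ∃ r₀ : ℕ, ∀ r : ℕ, r₀ ≤ r →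
      -1 + c / (r : ℝ) ^ 2 ≤ lasserreBound1 X r ∧
      lasserreBound1 X r ≤ -1 + C / (r : ℝ) ^ 2 := by
  refine ⟨1 / 6, by norm_num, 4000, by norm_num, 1, fun r hr => ?_⟩
  have hr' : (1:ℝ) ≤ r := by exact_mod_cast hr
  have key : ∀ s : ℝ[X], polyInt s = 1 →
      (∫ x in Icc (-1 : ℝ) 1, (X : ℝ[X]).eval x * s.eval x) = -1 + polyInt ((1 + X) * s) := by
    intro s hs
    have : (∫ x in Icc (-1 : ℝ) 1, (X : ℝ[X]).eval x * s.eval x) = polyInt (X * s) := by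
      rw [← polyInt_Icc]; simp only [eval_mul]
    rw [this, add_mul, one_mul, map_add, hs]; ring
  have hlow : ∀ v ∈ { v : ℝ | ∃ σ : Polynomial ℝ, IsSOSUpTo σ r ∧
      (∫ x in Icc (-1 : ℝ) 1, σ.eval x) = 1 ∧
      v = ∫ x in Icc (-1 : ℝ) 1, (X : ℝ[X]).eval x * σ.eval x },
      -1 + 1 / 6 / (r : ℝ) ^ 2 ≤ v := by
    rintro v ⟨s, hs, h1, rfl⟩
    rw [polyInt_Icc] at h1
    rw [key s h1]
    have := lower_sos hr hs
    rw [h1] at this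
    linarith
  obtain ⟨G, hd, hN, hE⟩ := upper_test (r / 2 + 1) (by omega)
  set N := polyInt (G ^ 4) with hNd
  set s : ℝ[X] := (1 / N) • G ^ 4 with hs
  have hs1 : polyInt s = 1 := by
    rw [hs, map_smul, smul_eq_mul, ← hNd]; field_simp
  have hsos : IsSOSUpTo s r := by
    refine ⟨1, fun _ => Polynomial.C (1 / √N) * G ^ 2, fun _ => ?_, ?_⟩
    · refine (natDegree_C_mul_le _ _).trans (natDegree_pow_le.trans ?_)
      omega
    · simp only [Finset.univ_unique, Finset.sum_const, Finset.card_singleton, one_smul]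
      rw [hs, smul_eq_C_mul, mul_pow, ← C_pow, div_pow, one_pow, Real.sq_sqrt hN.le]; ring
  have hmem : -1 + polyInt ((1 + X) * s) ∈ { v : ℝ | ∃ σ : Polynomial ℝ, IsSOSUpTo σ r ∧
      (∫ x in Icc (-1 : ℝ) 1, σ.eval x) = 1 ∧
      v = ∫ x in Icc (-1 : ℝ) 1, (X : ℝ[X]).eval x * σ.eval x } :=
    ⟨s, hsos, by rw [polyInt_Icc, hs1], (key s hs1).symm⟩
  refine ⟨le_csInf ⟨_, hmem⟩ hlow, (csInf_le ⟨_, hlow⟩ hmem).trans ?_⟩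
  rw [hs, mul_smul_comm, map_smul, smul_eq_mul]
  have hmr : (r:ℝ) / 2 ≤ ((r / 2 + 1 : ℕ) : ℝ) := by
    have : r ≤ 2 * (r / 2 + 1) := by omega
    have : (r:ℝ) ≤ 2 * ((r / 2 + 1 : ℕ) : ℝ) := by exact_mod_cast this
    linarith
  have h1 : 1 / N * polyInt ((1 + X) * G ^ 4) ≤ 1000 / ((r / 2 + 1 : ℕ) : ℝ) ^ 2 := by
    rw [one_div_mul_eq_div, div_le_iff₀ hN]; exact hE
  have h2 : 1000 / ((r / 2 + 1 : ℕ) : ℝ) ^ 2 ≤ 1000 / ((r:ℝ) / 2) ^ 2 := by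
    gcongr
  have h3 : 1000 / ((r:ℝ) / 2) ^ 2 = 4000 / (r:ℝ) ^ 2 := by field_simp; norm_num
  linarith
end
end

section
/- Let K = [−1, 1] ⊆ ℝ and f(x) = x^(2k) for an integer k ≥ 2 (so f_min = 0). Then the bounds f_pfm^(r) and f^(r) are asymptotically separated: for every M > 0 there exists r₀ ∈ ℕ such that f_pfm^(r) ≥ M·f^(r) for all r ≥ r₀. -/
open MeasureTheory Polynomial Set

noncomputable section

/-- The push-forward bound `f_pfm^(r)` for a univariate polynomial `f` on
`K = [-1,1]`, with respect to the Lebesgue measure restricted to `[-1,1]`. -/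
def pfmBound1 (f : Polynomial ℝ) (r : ℕ) : ℝ :=
  sInf { v : ℝ | ∃ s : Polynomial ℝ, IsSOSUpTo s r ∧
    (∫ x in Icc (-1 : ℝ) 1, s.eval (f.eval x)) = 1 ∧
    v = ∫ x in Icc (-1 : ℝ) 1, f.eval x * s.eval (f.eval x) }

lemma contEv (b : ℕ) (p : ℝ[X]) : Continuous (fun x : ℝ => p.eval (x ^ b)) := by
  exact p.continuous.comp (continuous_pow b)

lemma intC {g : ℝ → ℝ} (h : Continuous g) : IntegrableOn g (Icc (-1 : ℝ) 1) :=
  h.continuousOn.integrableOn_compact isCompact_Icc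

/-- integration functional against the push-forward measure -/
def ell (b : ℕ) : ℝ[X] →ₗ[ℝ] ℝ where
  toFun p := ∫ x in Icc (-1 : ℝ) 1, p.eval (x ^ b)
  map_add' p q := by
    simp only [eval_add]
    exact integral_add (intC (contEv b p)) (intC (contEv b q))
  map_smul' c p := by
    simp only [eval_smul, smul_eq_mul, RingHom.id_apply]
    exact integral_const_mul _ _

lemma ell_nonneg (k : ℕ) (p : ℝ[X]) (hp : ∀ t ∈ Icc (0:ℝ) 1, 0 ≤ p.eval t) :
    0 ≤ ell (2 * k) p := by
  refine setIntegral_nonneg measurableSet_Icc fun x hx => hp _ ⟨?_, ?_⟩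
  · rw [pow_mul]; positivity
  · rw [pow_mul]
    exact pow_le_one₀ (by positivity) (by nlinarith [hx.1, hx.2])

lemma ell_parts (k : ℕ) (hk : 0 < k) (Q : ℝ[X]) (hQ : Q.eval 1 = 0) :
    ell (2 * k) (C (1 / (2 * k : ℝ)) * Q + X * derivative Q) = 0 := by
  have hk' : (0 : ℝ) < k := by exact_mod_cast hk
  change (∫ x in Icc (-1 : ℝ) 1, _) = 0
  rw [integral_Icc_eq_integral_Ioc, ← intervalIntegral.integral_of_le (by norm_num)]
  have key : ∀ x ∈ uIcc (-1 : ℝ) 1,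
      HasDerivAt (fun x : ℝ => (1 / (2 * k : ℝ)) * (x * Q.eval (x ^ (2 * k))))
        ((C (1 / (2 * k : ℝ)) * Q + X * derivative Q).eval (x ^ (2 * k))) x := by
    intro x _
    have h1 := (Q.hasDerivAt (x ^ (2 * k))).comp x (hasDerivAt_pow (2 * k) x)
    have h2 := ((hasDerivAt_id x).mul h1).const_mul (1 / (2 * k : ℝ))
    refine h2.congr_deriv ?_
    simp only [eval_add, eval_mul, eval_C, eval_X, id, Function.comp]
    have : x ^ (2 * k) = x * x ^ (2 * k - 1) := by
      rw [← pow_succ']; congr 1; omega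
    push_cast
    generalize eval (x ^ (2 * k)) Q = u
    generalize eval (x ^ (2 * k)) (derivative Q) = v
    rw [this]
    field_simp
  rw [intervalIntegral.integral_eq_sub_of_hasDerivAt key
    ((contEv _ _).intervalIntegrable _ _)]
  have : ((-1 : ℝ)) ^ (2 * k) = 1 := by simp [pow_mul]
  simp [this, hQ]

/-- the Jacobi operator -/
def Lop (a : ℝ) (p : ℝ[X]) : ℝ[X] :=
  -(C (1 + a) * (1 - X) * derivative p - X * derivative p
    + X * (1 - X) * derivative (derivative p))

def lam (a : ℝ) (n : ℕ) : ℝ := n * (n + 1 + a)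

lemma Lop_add (a : ℝ) (p q : ℝ[X]) : Lop a (p + q) = Lop a p + Lop a q := by
  simp only [Lop, derivative_add]; ring

lemma Lop_C_mul (a c : ℝ) (p : ℝ[X]) : Lop a (C c * p) = C c * Lop a p := by
  simp only [Lop, derivative_C_mul]; ring

lemma Lop_X_pow_succ (a : ℝ) (n : ℕ) :
    Lop a (X ^ (n + 1)) = C (lam a (n + 1)) * X ^ (n + 1) - C ((n + 1) * (n + 1 + a)) * X ^ n := by
  rcases n with _ | n
  · simp [Lop, lam]; ring
  · simp only [Lop, lam, derivative_X_pow_succ, derivative_C_mul]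
    simp only [map_add, map_mul, map_one, map_natCast, Nat.cast_add, Nat.cast_one, Nat.cast_succ]
    ring

lemma Lop_X_pow_zero (a : ℝ) : Lop a (X ^ 0) = 0 := by simp [Lop]

/-- split off top monomial -/
lemma split_top (m : ℕ) (p : ℝ[X]) (hp : p.degree < ((m + 1 : ℕ) : WithBot ℕ)) :
    ∃ (c : ℝ) (q : ℝ[X]), q.degree < (m : WithBot ℕ) ∧ p = C c * X ^ m + q := by
  refine ⟨p.coeff m, p - C (p.coeff m) * X ^ m, ?_, by ring⟩
  rw [degree_lt_iff_coeff_zero] at hp ⊢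
  intro i hi
  rcases Nat.eq_or_lt_of_le hi with h | h
  · subst h; simp
  · rw [coeff_sub, hp i h, coeff_C_mul, coeff_X_pow, if_neg (by omega)]; simp

lemma lam_lt {a : ℝ} (ha : 0 < a) {m n : ℕ} (h : m < n) : lam a m < lam a n := by
  have : (m : ℝ) < n := by exact_mod_cast h
  have : (0:ℝ) ≤ m := by positivity
  unfold lam; nlinarith

lemma solve {a : ℝ} (ha : 0 < a) (n : ℕ) : ∀ m, m ≤ n → ∀ g : ℝ[X], g.degree < (m : WithBot ℕ) →
    ∃ u : ℝ[X], u.degree < (m : WithBot ℕ) ∧ Lop a u - C (lam a n) * u = g := by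
  intro m
  induction m with
  | zero =>
    intro _ g hg
    have : g = 0 := by
      apply degree_eq_bot.1
      simpa [Nat.WithBot.lt_zero_iff] using hg
    exact ⟨0, by simp, by simp [Lop, this]⟩
  | succ m ih =>
    intro hm g hg
    obtain ⟨c, q, hq, rfl⟩ := split_top m g hg
    have hne : lam a m - lam a n ≠ 0 := by
      have := lam_lt ha (show m < n by omega); linarith
    set d := c / (lam a m - lam a n) with hd
    have hdc : c = d * (lam a m - lam a n) := by rw [hd]; field_simp
    obtain ⟨w, hw, hLw⟩ : ∃ w : ℝ[X], w.degree < (m : WithBot ℕ) ∧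
        Lop a (X ^ m) = C (lam a m) * X ^ m + w := by
      rcases m with _ | m
      · exact ⟨0, by simp, by simp [Lop, lam]⟩
      · refine ⟨- (C ((m + 1) * (m + 1 + a)) * X ^ m), ?_, by rw [Lop_X_pow_succ]; ring⟩
        rw [degree_neg]
        refine lt_of_le_of_lt (degree_C_mul_X_pow_le _ _) ?_
        exact_mod_cast Nat.lt_succ_self m
    obtain ⟨u, hu, hLu⟩ := ih (by omega) (q - C d * w) (by
      refine lt_of_le_of_lt (degree_sub_le _ _) (max_lt hq ?_)
      refine lt_of_le_of_lt ?_ hw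
      rw [← smul_eq_C_mul]
      exact degree_smul_le _ _)
    refine ⟨C d * X ^ m + u, ?_, ?_⟩
    · refine lt_of_le_of_lt (degree_add_le _ _) (max_lt ?_ ?_)
      · refine lt_of_le_of_lt (degree_C_mul_X_pow_le _ _) ?_
        exact_mod_cast Nat.lt_succ_self m
      · exact hu.trans (by exact_mod_cast Nat.lt_succ_self m)
    · rw [Lop_add, Lop_C_mul, hLw, hdc, C_mul, C_sub]
      linear_combination hLu

lemma exJ {a : ℝ} (ha : 0 < a) (n : ℕ) :
    ∃ u : ℝ[X], u.degree < (n : WithBot ℕ) ∧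
      Lop a (X ^ n + u) = C (lam a n) * (X ^ n + u) := by
  rcases n with _ | n
  · exact ⟨0, by simp, by simp [Lop, lam]⟩
  obtain ⟨u, hu, h⟩ := solve ha (n + 1) (n + 1) le_rfl (C ((n + 1) * (n + 1 + a)) * X ^ n) (by
    refine lt_of_le_of_lt (degree_C_mul_X_pow_le _ _) ?_
    exact_mod_cast Nat.lt_succ_self n)
  refine ⟨u, hu, ?_⟩
  rw [Lop_add, Lop_X_pow_succ]
  linear_combination h

def Dform (k : ℕ) (p q : ℝ[X]) : ℝ := ell (2 * k) (X ^ 2 * (1 - X) * derivative p * derivative q)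

lemma Dform_eq (k : ℕ) (hk : 0 < k) (p q : ℝ[X]) :
    Dform k p q = ell (2 * k) (X * Lop (1 / (2 * k : ℝ)) p * q) := by
  have h := ell_parts k hk (X * (1 - X) * derivative p * q) (by simp)
  rw [← sub_eq_zero, Dform, ← map_sub, ← h]
  congr 1
  simp only [Lop, derivative_mul, derivative_X, derivative_sub, derivative_one, map_add, map_one]
  ring

lemma Dform_comm (k : ℕ) (p q : ℝ[X]) : Dform k p q = Dform k q p := by
  unfold Dform; congr 1; ring

lemma ell_C_mul (b : ℕ) (c : ℝ) (p : ℝ[X]) : ell b (C c * p) = c * ell b p := by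
  rw [← smul_eq_C_mul, map_smul, smul_eq_mul]

lemma jacobi_bernstein (k : ℕ) (hk : 0 < k) (n : ℕ) : ∀ p : ℝ[X], p.degree < ((n + 1 : ℕ) : WithBot ℕ) →
    Dform k p p ≤ lam (1 / (2 * k : ℝ)) n * ell (2 * k) (X * p * p) := by
  set a : ℝ := 1 / (2 * k : ℝ) with ha'
  have ha : 0 < a := by positivity
  choose u hu hJ using fun n => exJ ha n
  set J : ℕ → ℝ[X] := fun n => X ^ n + u n with hJd
  have hD : ∀ n q, Dform k (J n) q = lam a n * ell (2 * k) (X * J n * q) := by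
    intro n q
    rw [Dform_eq k hk, hJ, ← ell_C_mul]
    congr 1; ring
  have horth : ∀ m n, m < n → ell (2 * k) (X * J n * J m) = 0 := by
    intro m n h
    have h1 := hD n (J m)
    have h2 := hD m (J n)
    rw [Dform_comm, h1, show X * J m * J n = X * J n * J m by ring] at h2
    have h3 := lam_lt ha h
    have : (lam a n - lam a m) * ell (2 * k) (X * J n * J m) = 0 := by linarith
    rcases mul_eq_zero.1 this with h | h
    · linarith
    · exact h
  have hsplit : ∀ (m : ℕ) (p : ℝ[X]), p.degree < ((m + 1 : ℕ) : WithBot ℕ) →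
    ∃ (c : ℝ) (q : ℝ[X]), q.degree < (m : WithBot ℕ) ∧ p = C c * J m + q := by
    intro m p hp
    obtain ⟨c, q, hq, rfl⟩ := split_top m p hp
    refine ⟨c, q - C c * u m, ?_, by simp only [hJd]; ring⟩
    refine lt_of_le_of_lt (degree_sub_le _ _) (max_lt hq ?_)
    refine lt_of_le_of_lt ?_ (hu m)
    rw [← smul_eq_C_mul]
    exact degree_smul_le _ _
  have hz : ∀ q : ℝ[X], q.degree < ((0 : ℕ) : WithBot ℕ) → q = 0 := by
    intro q hq
    apply degree_eq_bot.1
    simpa [Nat.WithBot.lt_zero_iff] using hq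
  have horth2 : ∀ m n : ℕ, m ≤ n → ∀ q : ℝ[X], q.degree < (m : WithBot ℕ) →
      ell (2 * k) (X * J n * q) = 0 := by
    intro m n
    induction m with
    | zero => intro _ q hq; simp [hz q hq]
    | succ m ih =>
      intro hm q hq
      obtain ⟨c, q', hq', rfl⟩ := hsplit m q hq
      rw [show X * J n * (C c * J m + q') = C c * (X * J n * J m) + X * J n * q' by ring,
        map_add, ell_C_mul, horth m n (by omega), ih (by omega) q' hq']
      simp
  have hpos : ∀ q : ℝ[X], 0 ≤ ell (2 * k) (X * q * q) := by
    intro q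
    apply ell_nonneg
    intro t ht
    simp only [eval_mul, eval_X]
    have := mul_nonneg ht.1 (mul_self_nonneg (q.eval t))
    linarith
  have step : ∀ (n : ℕ) (p : ℝ[X]), p.degree < ((n + 1 : ℕ) : WithBot ℕ) → ∃ (c : ℝ) (q : ℝ[X]),
      q.degree < (n : WithBot ℕ) ∧
      Dform k p p = c ^ 2 * (lam a n * ell (2 * k) (X * J n * J n)) + Dform k q q ∧
      ell (2 * k) (X * p * p) = c ^ 2 * ell (2 * k) (X * J n * J n) + ell (2 * k) (X * q * q) := by
    intro n p hp
    obtain ⟨c, q, hq, rfl⟩ := hsplit n p hp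
    have ho := horth2 n n le_rfl q hq
    refine ⟨c, q, hq, ?_, ?_⟩
    · have e1 := hD n (J n)
      have e2 := hD n q
      rw [ho, mul_zero] at e2
      rw [← e1]
      have : Dform k (C c * J n + q) (C c * J n + q) =
          c ^ 2 * Dform k (J n) (J n) + 2 * c * Dform k (J n) q + Dform k q q := by
        unfold Dform
        rw [← ell_C_mul, ← ell_C_mul, ← map_add, ← map_add]
        congr 1
        simp only [derivative_add, derivative_C_mul, map_mul, map_pow, map_ofNat]
        ring
      rw [this, e2]; ring
    · have : ell (2 * k) (X * (C c * J n + q) * (C c * J n + q)) =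
          c ^ 2 * ell (2 * k) (X * J n * J n) + 2 * c * ell (2 * k) (X * J n * q)
            + ell (2 * k) (X * q * q) := by
        rw [← ell_C_mul, ← ell_C_mul, ← map_add, ← map_add]
        congr 1
        simp only [map_mul, map_pow, map_ofNat]
        ring
      rw [this, ho]; ring
  induction n with
  | zero =>
    intro p hp
    obtain ⟨c, q, hq, h1, h2⟩ := step 0 p hp
    rw [h1, h2, hz q hq]
    simp [Dform, lam]
  | succ n ih =>
    intro p hp
    obtain ⟨c, q, hq, h1, h2⟩ := step (n + 1) p hp
    rw [h1, h2]
    have := ih q hq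
    have h3 := lam_lt ha (Nat.lt_succ_self n)
    nlinarith [hpos q]

lemma pfm_sq (k : ℕ) (hk : 2 ≤ k) (r : ℕ) (p : ℝ[X]) (hp : p.natDegree ≤ r) :
    ell (2 * k) (p ^ 2) ≤ (4 * k) * (4 * k + 2) * ((r : ℝ) + 1) ^ 2 * ell (2 * k) (X * p ^ 2) := by
  have hb := jacobi_bernstein k (by omega) r p (by
    refine lt_of_le_of_lt degree_le_natDegree ?_
    exact_mod_cast Nat.lt_succ_of_le hp)
  have hk' : (2 : ℝ) ≤ k := by exact_mod_cast hk
  set a : ℝ := 1 / (2 * k : ℝ) with ha'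
  have ha : 0 < a := by positivity
  have ha1 : a ≤ 1 := by rw [ha', div_le_one (by positivity)]; linarith
  have hka : (k : ℝ) * a = 1 / 2 := by rw [ha']; field_simp
  have h1 := ell_parts k (by omega) ((1 - X) * p ^ 2) (by simp)
  rw [← ha'] at h1
  have e1 : C a * ((1 - X) * p ^ 2) + X * derivative ((1 - X) * p ^ 2) =
      C a * p ^ 2 - C (1 + a) * (X * p ^ 2) + C 2 * (X * (1 - X) * p * derivative p) := by
    simp only [pow_two, derivative_mul, derivative_sub, derivative_one, derivative_X, map_add,
      map_one, map_ofNat]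
    ring
  rw [e1, map_add, map_sub, ell_C_mul, ell_C_mul, ell_C_mul] at h1
  have h2 : 0 ≤ ell (2 * k) ((1 - X) * (C (a / 2) * p + X * derivative p) ^ 2) := by
    apply ell_nonneg
    intro t ht
    simp only [eval_mul, eval_sub, eval_one, eval_X, eval_pow]
    exact mul_nonneg (by linarith [ht.2]) (sq_nonneg _)
  have e2 : (1 - X) * (C (a / 2) * p + X * derivative p) ^ 2 =
      C ((a / 2) ^ 2) * p ^ 2 - C ((a / 2) ^ 2) * (X * p ^ 2)
        + C (a / 2) * (C 2 * (X * (1 - X) * p * derivative p))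
        + X ^ 2 * (1 - X) * derivative p * derivative p := by
    simp only [map_pow, map_ofNat]
    ring
  rw [e2, map_add, map_add, map_sub, ell_C_mul, ell_C_mul, ell_C_mul, ell_C_mul] at h2
  have hA : 0 ≤ ell (2 * k) (X * p ^ 2) := by
    apply ell_nonneg
    intro t ht
    simp only [eval_mul, eval_X, eval_pow]
    exact mul_nonneg ht.1 (sq_nonneg _)
  unfold Dform at hb
  rw [show X * p * p = X * p ^ 2 by ring] at hb
  generalize ell (2 * k) (X * p ^ 2) = A at *
  generalize ell (2 * k) (p ^ 2) = B at *
  generalize ell (2 * k) (X * (1 - X) * p * derivative p) = E at *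
  generalize ell (2 * k) (X ^ 2 * (1 - X) * derivative p * derivative p) = D at *
  have hl : lam a r ≤ ((r : ℝ) + 1) ^ 2 := by
    unfold lam; have : (0 : ℝ) ≤ r := by positivity
    nlinarith
  have hD : D ≤ ((r : ℝ) + 1) ^ 2 * A := hb.trans (mul_le_mul_of_nonneg_right hl hA)
  have hR : 1 ≤ ((r : ℝ) + 1) ^ 2 := by
    have : (0 : ℝ) ≤ r := by positivity
    nlinarith
  generalize ((r : ℝ) + 1) ^ 2 = R at *
  -- (a/2)^2 B ≤ D + (a/2)(1+a/2) A
  have h3 : (a / 2) ^ 2 * B ≤ R * A + (a / 2) * (1 + a / 2) * A := by nlinarith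
  have hAR : A ≤ R * A := by nlinarith
  have h4 : (a / 2) ^ 2 * B ≤ (1 + a) * (R * A) := by
    have i1 : a * A ≤ a * (R * A) := by gcongr
    have i2 : (a / 2) * (1 + a / 2) * A ≤ a * A := by
      apply mul_le_mul_of_nonneg_right _ hA
      nlinarith
    linarith
  have h5 : (4 * k : ℝ) ^ 2 * ((a / 2) ^ 2 * B) ≤ (4 * k : ℝ) ^ 2 * ((1 + a) * (R * A)) := by
    gcongr
  have e5 : (4 * k : ℝ) ^ 2 * ((a / 2) ^ 2 * B) = B := by
    have : (4 * k : ℝ) ^ 2 * (a / 2) ^ 2 = 1 := by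
      rw [← mul_pow, show (4 * k : ℝ) * (a / 2) = 2 * (k * a) by ring, hka]; norm_num
    rw [← mul_assoc, this, one_mul]
  rw [e5] at h5
  calc B ≤ _ := h5
    _ = (4 * k) * (4 * k + 4 * (k * a)) * (R * A) := by ring
    _ = _ := by rw [hka]; ring

open Polynomial.Chebyshev in
lemma exists_q (m : ℕ) : ∃ q : ℝ[X], q.natDegree ≤ 4 * m ∧
    (∀ x : ℝ, |x| ≤ 1 → |x * q.eval x| ≤ 1) ∧
    (∀ x : ℝ, 0 < x → x ≤ 1 / (4 * m + 1 : ℝ) → (4 * m + 1 : ℝ) / 2 ≤ q.eval x) := by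
  have h0 : (T ℝ (4 * m + 1 : ℤ)).eval 0 = 0 :=
    T_eval_zero_of_odd ℝ ⟨2 * m, by ring⟩
  have hdvd : X ∣ T ℝ (4 * m + 1 : ℤ) := by
    rw [X_dvd_iff, coeff_zero_eq_eval_zero, h0]
  obtain ⟨q, hq⟩ := hdvd
  have hev : ∀ x : ℝ, (T ℝ (4 * m + 1 : ℤ)).eval x = x * q.eval x := by
    intro x; rw [hq]; simp
  refine ⟨q, ?_, ?_, ?_⟩
  · have h1 := natDegree_T ℝ (4 * m + 1 : ℤ)
    have hq0 : q ≠ 0 := by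
      rintro rfl
      exact T_ne_zero ℝ (4 * m + 1 : ℤ) (by simpa using hq)
    rw [hq, natDegree_X_mul hq0] at h1
    omega
  · intro x hx
    rw [← hev]
    exact abs_eval_T_real_le_one _ hx
  · intro x hx hx1
    have hN : (1 : ℝ) ≤ 4 * m + 1 := by
      have : (0 : ℝ) ≤ m := by positivity
      linarith
    set N : ℝ := 4 * m + 1 with hNd
    have hNp : 0 < N := by linarith
    have hxl : x ≤ 1 := hx1.trans (by rw [div_le_one hNp]; exact hN)
    set θ := Real.arcsin x with hθ
    have hsin : Real.sin θ = x := Real.sin_arcsin (by linarith) hxl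
    have hθ0 : 0 ≤ θ := Real.arcsin_nonneg.2 hx.le
    have hθx : x ≤ θ := by rw [← hsin]; exact Real.sin_le hθ0
    have hθ2 : θ ≤ Real.pi / 2 := Real.arcsin_le_pi_div_two x
    have hpi := Real.pi_pos
    have hpi4 := Real.pi_le_four
    have hlow := Real.mul_le_sin hθ0 hθ2
    rw [hsin] at hlow
    have hNθ : N * θ ≤ Real.pi / 2 := by
      have h3 : N * x ≤ 1 := by
        rw [le_div_iff₀ hNp] at hx1; linarith
      have h4 : N * (2 / Real.pi * θ) ≤ 1 := (mul_le_mul_of_nonneg_left hlow hNp.le).trans h3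
      have h5 : N * θ = (Real.pi / 2) * (N * (2 / Real.pi * θ)) := by field_simp
      rw [h5]; nlinarith
    have hT : (T ℝ (4 * m + 1 : ℤ)).eval x = Real.sin (N * θ) := by
      rw [← hsin, ← Real.cos_pi_div_two_sub, T_real_cos]
      push_cast
      rw [← Real.cos_pi_div_two_sub]
      rw [show (4 * (m : ℝ) + 1) * (Real.pi / 2 - θ) =
        (Real.pi / 2 - N * θ) + m * (2 * Real.pi) by rw [hNd]; ring]
      exact Real.cos_add_nat_mul_two_pi _ _
    have h6 := Real.mul_le_sin (mul_nonneg hNp.le hθ0) hNθ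
    rw [← hT, hev] at h6
    have h7 : (1 : ℝ) / 2 ≤ 2 / Real.pi := by
      rw [div_le_div_iff₀ (by norm_num) hpi]; linarith
    have h8 : 1 / 2 * (N * x) ≤ x * q.eval x := by
      refine le_trans ?_ h6
      gcongr
    have : x * (N / 2) ≤ x * q.eval x := by linarith
    exact le_of_mul_le_mul_left this hx

lemma lasserre_upper (k : ℕ) (hk : 2 ≤ k) (m r : ℕ) (hr : 8 * m ≤ r) :
    lasserreBound1 (X ^ (2 * k)) r ≤ 32 / (4 * m + 1 : ℝ) ^ 3 := by
  obtain ⟨q, hqd, hq1, hq2⟩ := exists_q m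
  have hN : (0 : ℝ) < 4 * m + 1 := by positivity
  have hN1 : (1 : ℝ) ≤ 4 * m + 1 := by
    have : (0 : ℝ) ≤ m := by positivity
    linarith
  set N : ℝ := 4 * m + 1 with hNd
  have hc : Continuous fun x : ℝ => q.eval x ^ 4 := by fun_prop
  set I : ℝ := ∫ x in Icc (-1 : ℝ) 1, q.eval x ^ 4 with hI
  have hIlow : N ^ 3 / 16 ≤ I := by
    have hsub : Ioc (0 : ℝ) (1 / N) ⊆ Icc (-1) 1 := by
      intro x hx
      have : 1 / N ≤ 1 := by rw [div_le_one hN]; exact hN1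
      exact ⟨by linarith [hx.1], hx.2.trans this⟩
    have h1 : ∫ x in Ioc (0 : ℝ) (1 / N), q.eval x ^ 4 ≤ I :=
      setIntegral_mono_set (intC hc) (Filter.Eventually.of_forall fun x => by positivity)
        (Filter.Eventually.of_forall hsub)
    have h2 : ∫ x in Ioc (0 : ℝ) (1 / N), (N / 2) ^ 4 ≤ ∫ x in Ioc (0 : ℝ) (1 / N), q.eval x ^ 4 := by
      refine setIntegral_mono_on (by simp) ((intC hc).mono_set hsub) measurableSet_Ioc ?_
      intro x hx
      exact pow_le_pow_left₀ (by positivity) (hq2 x hx.1 hx.2) 4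
    refine le_trans (le_of_eq ?_) (h2.trans h1)
    rw [setIntegral_const]
    simp only [Real.volume_real_Ioc, smul_eq_mul, sub_zero]
    rw [max_eq_left (by positivity)]
    field_simp
    norm_num
  have hIpos : 0 < I := lt_of_lt_of_le (by positivity) hIlow
  have hup : ∫ x in Icc (-1 : ℝ) 1, x ^ (2 * k) * q.eval x ^ 4 ≤ 2 := by
    have : ∫ x in Icc (-1 : ℝ) 1, x ^ (2 * k) * q.eval x ^ 4 ≤ ∫ x in Icc (-1 : ℝ) 1, (1 : ℝ) := by
      refine setIntegral_mono_on (intC (by fun_prop)) (by simp) measurableSet_Icc ?_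
      intro x hx
      have hx' : |x| ≤ 1 := abs_le.2 hx
      have h1 := hq1 x hx'
      have h2 : (x * q.eval x) ^ 4 ≤ 1 := by
        rw [← Even.pow_abs (by decide : Even 4)]
        exact pow_le_one₀ (abs_nonneg _) h1
      have h3 : x ^ (2 * k) ≤ x ^ 4 := by
        rw [← Even.pow_abs (by decide : Even 4), ← Even.pow_abs (even_two_mul k)]
        exact pow_le_pow_of_le_one (abs_nonneg _) hx' (by omega)
      calc x ^ (2 * k) * q.eval x ^ 4 ≤ x ^ 4 * q.eval x ^ 4 := by gcongr
        _ = (x * q.eval x) ^ 4 := by ring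
        _ ≤ 1 := h2
    refine this.trans (le_of_eq ?_)
    simp
    norm_num
  have hmem : (1 / I) * ∫ x in Icc (-1 : ℝ) 1, x ^ (2 * k) * q.eval x ^ 4 ∈
      { v : ℝ | ∃ σ : Polynomial ℝ, IsSOSUpTo σ r ∧
        (∫ x in Icc (-1 : ℝ) 1, σ.eval x) = 1 ∧
        v = ∫ x in Icc (-1 : ℝ) 1, (X ^ (2 * k) : ℝ[X]).eval x * σ.eval x } := by
    have hs : Real.sqrt (1 / I) ^ 2 = 1 / I := Real.sq_sqrt (by positivity)
    have hev : ∀ x : ℝ, ((C (Real.sqrt (1 / I)) * q ^ 2) ^ 2).eval x = (1 / I) * q.eval x ^ 4 := by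
      intro x
      simp only [eval_pow, eval_mul, eval_C]
      rw [mul_pow, hs]; ring
    refine ⟨(C (Real.sqrt (1 / I)) * q ^ 2) ^ 2,
      ⟨1, fun _ => C (Real.sqrt (1 / I)) * q ^ 2, ?_, by simp⟩, ?_, ?_⟩
    · intro _
      refine (natDegree_C_mul_le _ _).trans (natDegree_pow_le.trans ?_)
      omega
    · simp only [hev]
      rw [integral_const_mul, ← hI]
      field_simp
    · simp only [hev, eval_pow, eval_X]
      rw [← integral_const_mul]
      congr 1; ext x; ring
  have hbdd : BddBelow { v : ℝ | ∃ σ : Polynomial ℝ, IsSOSUpTo σ r ∧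
        (∫ x in Icc (-1 : ℝ) 1, σ.eval x) = 1 ∧
        v = ∫ x in Icc (-1 : ℝ) 1, (X ^ (2 * k) : ℝ[X]).eval x * σ.eval x } := by
    refine ⟨0, ?_⟩
    rintro v ⟨σ, ⟨n, p, _, rfl⟩, _, rfl⟩
    refine setIntegral_nonneg measurableSet_Icc fun x _ => ?_
    simp only [eval_pow, eval_X, eval_finsetSum]
    refine mul_nonneg ((even_two_mul k).pow_nonneg x) (Finset.sum_nonneg fun i _ => sq_nonneg _)
  refine (csInf_le hbdd hmem).trans ?_
  calc (1 / I) * ∫ x in Icc (-1 : ℝ) 1, x ^ (2 * k) * q.eval x ^ 4 ≤ (1 / I) * 2 := by gcongr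
    _ ≤ (1 / (N ^ 3 / 16)) * 2 := by gcongr
    _ = _ := by field_simp; norm_num

lemma pfm_lower (k : ℕ) (hk : 2 ≤ k) (r : ℕ) :
    1 / ((4 * k) * (4 * k + 2) * ((r : ℝ) + 1) ^ 2) ≤ pfmBound1 (X ^ (2 * k)) r := by
  have hk' : (0 : ℝ) < k := by exact_mod_cast (by omega : 0 < k)
  apply le_csInf
  · refine ⟨_, (C (Real.sqrt (1 / 2))) ^ 2, ⟨1, fun _ => C (Real.sqrt (1 / 2)), ?_, by simp⟩, ?_, rfl⟩
    · intro _; simp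
    · have hs : Real.sqrt (1 / 2) ^ 2 = 1 / 2 := Real.sq_sqrt (by positivity)
      simp only [eval_pow, eval_C, hs]
      rw [setIntegral_const]
      simp
      norm_num
  · rintro v ⟨s, ⟨n, p, hp, rfl⟩, h1, rfl⟩
    have e1 : ell (2 * k) (∑ i, p i ^ 2) = 1 := by
      rw [← h1]
      change (∫ x in Icc (-1 : ℝ) 1, _) = _
      simp only [eval_pow, eval_X]
    have e2 : ell (2 * k) (X * ∑ i, p i ^ 2) = ∫ x in Icc (-1 : ℝ) 1,
        (X ^ (2 * k) : ℝ[X]).eval x * (∑ i, p i ^ 2).eval ((X ^ (2 * k) : ℝ[X]).eval x) := by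
      change (∫ x in Icc (-1 : ℝ) 1, _) = _
      simp only [eval_mul, eval_pow, eval_X]
    rw [← e2, div_le_iff₀' (by positivity)]
    refine e1.symm.le.trans ?_
    rw [Finset.mul_sum, map_sum, map_sum, Finset.mul_sum]
    exact Finset.sum_le_sum fun i _ => pfm_sq k hk r (p i) (hp i)

/-- Separation between the bounds `f^(r)` and `f_pfm^(r)` for `f(x) = x^(2k)`,
`k ≥ 2`, on `[-1,1]`: for every `M > 0` one has `f_pfm^(r) ≥ M·f^(r)` for all
sufficiently large `r`. -/
theorem pfm_lasserre_separation (k : ℕ) (hk : 2 ≤ k) :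
    ∀ M > (0 : ℝ), ∃ r₀ : ℕ, ∀ r : ℕ, r₀ ≤ r →
      M * lasserreBound1 (X ^ (2 * k)) r ≤ pfmBound1 (X ^ (2 * k)) r := by
  intro M hM
  set K : ℝ := (4 * k) * (4 * k + 2) with hK
  have hk' : (0 : ℝ) < k := by exact_mod_cast (by omega : 0 < k)
  have hKp : 0 < K := by positivity
  obtain ⟨r₀, hr₀⟩ := exists_nat_ge (8 * (2048 * M * K))
  refine ⟨r₀, fun r hr => ?_⟩
  have h1 := lasserre_upper k hk (r / 8) r (Nat.mul_div_le r 8)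
  have h2 := pfm_lower k hk r
  rw [← hK] at h2
  have hN : ((r : ℝ) + 1) ≤ 8 * (4 * ((r / 8 : ℕ) : ℝ) + 1) := by
    have : r + 1 ≤ 8 * (4 * (r / 8) + 1) := by omega
    exact_mod_cast this
  have hNp : (0 : ℝ) < 4 * ((r / 8 : ℕ) : ℝ) + 1 := by positivity
  generalize (4 * ((r / 8 : ℕ) : ℝ) + 1) = N at *
  have hrr : (r₀ : ℝ) ≤ r := by exact_mod_cast hr
  have hNM : 2048 * M * K ≤ N := by linarith
  calc M * lasserreBound1 (X ^ (2 * k)) r ≤ M * (32 / N ^ 3) := by gcongr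
    _ ≤ 1 / (K * (8 * N) ^ 2) := by
      rw [mul_div_assoc', div_le_div_iff₀ (by positivity) (by positivity)]
      have : 2048 * M * K * N ^ 2 ≤ N * N ^ 2 := by gcongr
      linarith
    _ ≤ 1 / (K * ((r : ℝ) + 1) ^ 2) := by gcongr
    _ ≤ _ := h2
end
end
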